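/- Let L > 0 and T > 0. There exists a constant C > 0 such that for every z₀ ∈ H³(0,L) with z₀(0) = z₀(L) = z₀′(L) = 0 and every classical solution z of the linearized KdV system on [0,T] with z(0,·) = z₀, one has ‖z(t,·)‖_{H₀¹(0,L)} ≤ (C/√t) ‖z₀‖_{L²(0,L)} for all t ∈ (0,T]. -/

import Mathlib

open Set Real MeasureTheory

/-- The `L²(0,L)` norm of a function on `(0,L)`. -/
noncomputable def L2norm (L : ℝ) (f : ℝ → ℝ) : ℝ :=
  Real.sqrt (∫ x in (0:ℝ)..L, (f x) ^ 2)

/-- The `H¹(0,L)` (hence `H₀¹(0,L)`) norm of a function on `(0,L)`, the derivative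
being taken within `[0,L]`. -/
noncomputable def H1norm (L : ℝ) (f : ℝ → ℝ) : ℝ :=
  Real.sqrt (∫ x in (0:ℝ)..L, ((f x) ^ 2 + (derivWithin f (Icc (0:ℝ) L) x) ^ 2))

/-- A classical solution of the linearized KdV system
`z_t + z_x + z_xxx = 0`, `z(t,0) = z(t,L) = z_x(t,L) = 0`, on `[0,T] × [0,L]`. -/
def IsLinearKdVSol (L T : ℝ) (z : ℝ → ℝ → ℝ) : Prop :=
  (∀ t ∈ Icc (0:ℝ) T, ContDiffOn ℝ 3 (z t) (Icc (0:ℝ) L)) ∧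
  (∀ x ∈ Icc (0:ℝ) L, ContDiffOn ℝ 1 (fun s => z s x) (Icc (0:ℝ) T)) ∧
  ContinuousOn (fun p : ℝ × ℝ => z p.1 p.2) (Icc (0:ℝ) T ×ˢ Icc (0:ℝ) L) ∧
  (∀ t ∈ Ioo (0:ℝ) T, ∀ x ∈ Ioo (0:ℝ) L,
    derivWithin (fun s => z s x) (Icc (0:ℝ) T) t
      + derivWithin (z t) (Icc (0:ℝ) L) x
      + iteratedDerivWithin 3 (z t) (Icc (0:ℝ) L) x = 0) ∧
  (∀ t ∈ Icc (0:ℝ) T,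
    z t 0 = 0 ∧ z t L = 0 ∧ derivWithin (z t) (Icc (0:ℝ) L) L = 0)

/-!
Testing `z_t + z_x + z_xxx = 0` with the weights `1` and `x` shows that `∫ z ^ 2` is nonincreasing
and that the space-time integral of `z_x ^ 2` is controlled by `∫ z 0 ^ 2`. If `z` is regular in
time, then `z_t` solves the same system. As `z_t = -(z_x + z_xxx)`, interpolation between `z_x`
and `z_tx` makes `t ^ 3 * ∫ (1 + x) * z_t ^ 2`, corrected by multiples of `∫ x * z ^ 2` and of
`t`, a Lyapunov function, whence `∫ z_t ^ 2 ≤ C * t ^ (-3) * ∫ z 0 ^ 2`. Interpolating `z_x`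
between `z` and `z_xxx` then gives `∫ z_x ^ 2 ≤ C / t * ∫ z 0 ^ 2`.

A classical solution becomes regular in time after averaging in time, but this needs an integrated
form of the equation, while `z_t` is only known to be continuous in `t` for each fixed `x` and in
`x` for each fixed `t`. The equation is therefore paired with the Green kernel of `d³/dx³`, and a
Baire-category argument shows that its time-integrated form holds: otherwise, on a relatively open
part of the closed set of bad times `z_t` would be bounded uniformly in `x`, while the gaps of
this set contribute a summable amount because `∫ |z t - z s| ≤ c * (t - s)` across a gap `(s, t)`.
-/

namespace LinearKdV

/-! ### Integral inequalities on an interval -/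

section IntegralEstimates

variable {a b m ε : ℝ} {f f₁ f₂ : ℝ → ℝ}

theorem integral_eq_sub_of_hasDerivAt_Ioo (hab : a ≤ b) (hf : Continuous f) (hf₁ : Continuous f₁)
    (hd : ∀ x ∈ Ioo a b, HasDerivAt f (f₁ x) x) : ∫ x in a..b, f₁ x = f b - f a :=
  intervalIntegral.integral_eq_sub_of_hasDerivAt_of_le hab hf.continuousOn hd
    (hf₁.intervalIntegrable _ _)

theorem integral_add_of_continuous (hf : Continuous f) (hf₁ : Continuous f₁) :
    ∫ x in a..b, (f x + f₁ x) = (∫ x in a..b, f x) + ∫ x in a..b, f₁ x :=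
  intervalIntegral.integral_add (hf.intervalIntegrable _ _) (hf₁.intervalIntegrable _ _)

theorem integral_sub_of_continuous (hf : Continuous f) (hf₁ : Continuous f₁) :
    ∫ x in a..b, (f x - f₁ x) = (∫ x in a..b, f x) - ∫ x in a..b, f₁ x :=
  intervalIntegral.integral_sub (hf.intervalIntegrable _ _) (hf₁.intervalIntegrable _ _)

theorem integral_mono_of_continuous (hab : a ≤ b) (hf : Continuous f) (hf₁ : Continuous f₁)
    (h : ∀ x ∈ Icc a b, f x ≤ f₁ x) : ∫ x in a..b, f x ≤ ∫ x in a..b, f₁ x :=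
  intervalIntegral.integral_mono_on hab (hf.intervalIntegrable _ _) (hf₁.intervalIntegrable _ _) h

theorem integral_le_const_mul_add_const_mul (hab : a ≤ b) (hf : Continuous f)
    (hf₁ : Continuous f₁) (hf₂ : Continuous f₂) (c d : ℝ)
    (h : ∀ x ∈ Icc a b, f x ≤ c * f₁ x + d * f₂ x) :
    ∫ x in a..b, f x ≤ c * (∫ x in a..b, f₁ x) + d * ∫ x in a..b, f₂ x := by
  simp only [← intervalIntegral.integral_const_mul]
  rw [← integral_add_of_continuous (by fun_prop) (by fun_prop)]
  exact integral_mono_of_continuous hab hf (by fun_prop) h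

theorem integral_sq_nonneg (hab : a ≤ b) (f : ℝ → ℝ) : 0 ≤ ∫ x in a..b, f x ^ 2 :=
  intervalIntegral.integral_nonneg_of_forall hab fun _ => sq_nonneg _

theorem integral_affine_mul_sq_le {d : ℝ} (hb : 0 ≤ b) (hf : Continuous f) (c : ℝ)
    (hd : 0 ≤ d) :
    ∫ x in (0 : ℝ)..b, (c + d * x) * f x ^ 2 ≤ (c + d * b) * ∫ x in (0 : ℝ)..b, f x ^ 2 := by
  rw [← intervalIntegral.integral_const_mul]
  refine integral_mono_of_continuous hb (by fun_prop) (by fun_prop) fun x hx => ?_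
  gcongr
  exact hx.2

theorem le_integral_affine_mul_sq {d : ℝ} (hb : 0 ≤ b) (hf : Continuous f) (c : ℝ) (hd : 0 ≤ d) :
    c * (∫ x in (0 : ℝ)..b, f x ^ 2) ≤ ∫ x in (0 : ℝ)..b, (c + d * x) * f x ^ 2 := by
  rw [← intervalIntegral.integral_const_mul]
  refine integral_mono_of_continuous hb (by fun_prop) (by fun_prop) fun x hx => ?_
  gcongr
  linarith [mul_nonneg hd hx.1]

theorem two_mul_mul_le (x y : ℝ) (hm : 0 < m) : 2 * x * y ≤ m⁻¹ * x ^ 2 + m * y ^ 2 := by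
  have := two_mul_le_add_mul_sq (a := x) (b := y) (inv_pos.2 hm)
  rwa [inv_inv] at this

theorem integral_mul_eq_sub_of_hasDerivAt_Ioo {g g₁ : ℝ → ℝ} (hab : a ≤ b) (hf : Continuous f)
    (hf₁ : Continuous f₁) (hg : Continuous g) (hg₁ : Continuous g₁)
    (hfd : ∀ x ∈ Ioo a b, HasDerivAt f (f₁ x) x) (hgd : ∀ x ∈ Ioo a b, HasDerivAt g (g₁ x) x) :
    ∫ x in a..b, g x * f₁ x = g b * f b - g a * f a - ∫ x in a..b, g₁ x * f x := by
  have h := integral_eq_sub_of_hasDerivAt_Ioo (f := fun x => g x * f x) hab (by fun_prop)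
    (by fun_prop) fun x hx => (hgd x hx).fun_mul (hfd x hx)
  rw [integral_add_of_continuous (by fun_prop) (by fun_prop)] at h
  linarith

theorem sq_le_of_right_eq_zero (hab : a ≤ b) (hf : Continuous f) (hf₁ : Continuous f₁)
    (hd : ∀ x ∈ Ioo a b, HasDerivAt f (f₁ x) x) (hb : f b = 0) (hm : 0 < m) :
    f a ^ 2 ≤ m⁻¹ * (∫ x in a..b, f x ^ 2) + m * ∫ x in a..b, f₁ x ^ 2 := by
  have h := integral_eq_sub_of_hasDerivAt_Ioo (f := fun x => -f x ^ 2)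
    (f₁ := fun x => -(2 * f x * f₁ x)) hab (by fun_prop) (by fun_prop)
    fun x hx => by simpa using ((hd x hx).fun_pow 2).fun_neg
  calc f a ^ 2 = ∫ x in a..b, -(2 * f x * f₁ x) := by rw [h, hb]; ring
    _ ≤ _ := integral_le_const_mul_add_const_mul hab (by fun_prop) (by fun_prop) (by fun_prop) _ _
      fun x _ => by simpa using two_mul_mul_le (-f x) (f₁ x) hm

theorem length_mul_sq_le (hab : a ≤ b) (hf : Continuous f) (hf₁ : Continuous f₁)
    (hd : ∀ x ∈ Ioo a b, HasDerivAt f (f₁ x) x) (hm : 0 < m) :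
    (b - a) * f a ^ 2 ≤
      (1 + (b - a) * m⁻¹) * (∫ x in a..b, f x ^ 2) + (b - a) * m * ∫ x in a..b, f₁ x ^ 2 := by
  have h := integral_eq_sub_of_hasDerivAt_Ioo (f := fun x => (x - b) * f x ^ 2)
    (f₁ := fun x => f x ^ 2 + (x - b) * (2 * f x * f₁ x)) hab (by fun_prop) (by fun_prop)
    fun x hx => by
      simpa using ((hasDerivAt_id' x).sub_const b).fun_mul ((hd x hx).fun_pow 2)
  calc (b - a) * f a ^ 2 = ∫ x in a..b, (f x ^ 2 + (x - b) * (2 * f x * f₁ x)) := by rw [h]; ring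
    _ ≤ _ := ?_
  refine integral_le_const_mul_add_const_mul hab (by fun_prop) (by fun_prop) (by fun_prop) _ _
    fun x hx => ?_
  have hxb : 0 ≤ b - x := sub_nonneg.2 hx.2
  have : 0 ≤ m⁻¹ * (-f x) ^ 2 + m * f₁ x ^ 2 := by positivity
  calc f x ^ 2 + (x - b) * (2 * f x * f₁ x) = f x ^ 2 + (b - x) * (2 * -f x * f₁ x) := by ring
    _ ≤ f x ^ 2 + (b - x) * (m⁻¹ * (-f x) ^ 2 + m * f₁ x ^ 2) := by
      gcongr
      exact two_mul_mul_le _ _ hm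
    _ ≤ f x ^ 2 + (b - a) * (m⁻¹ * (-f x) ^ 2 + m * f₁ x ^ 2) := by
      gcongr
      exact hx.1
    _ = _ := by ring

/- Twice the integral of `f₁ ^ 2` equals `-2 * f a * f₁ a - 2 * ∫ f * f₂`, and the two preceding
inequalities, at the length scales `√ε / 4` and `8 * √ε`, control the boundary term. -/
theorem integral_deriv_sq_le (hf : Continuous f) (hf₁ : Continuous f₁)
    (hf₂ : Continuous f₂) (hd : ∀ x ∈ Ioo a b, HasDerivAt f (f₁ x) x)
    (hd₁ : ∀ x ∈ Ioo a b, HasDerivAt f₁ (f₂ x) x) (hb : f b = 0) (hε : 0 < ε)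
    (hab : 8 * √ε ≤ b - a) :
    ∫ x in a..b, f₁ x ^ 2 ≤
      6 * ε * (∫ x in a..b, f₂ x ^ 2) + 4 / ε * ∫ x in a..b, f x ^ 2 := by
  obtain ⟨μ, hμ, rfl⟩ : ∃ μ > 0, μ ^ 2 = ε := ⟨√ε, Real.sqrt_pos.2 hε, Real.sq_sqrt hε.le⟩
  rw [Real.sqrt_sq hμ.le] at hab
  have hℓ : 0 < b - a := by linarith
  have hle : a ≤ b := by linarith
  set P := ∫ x in a..b, f x ^ 2
  set Q := ∫ x in a..b, f₁ x ^ 2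
  set R := ∫ x in a..b, f₂ x ^ 2
  have hQ : 0 ≤ Q := integral_sq_nonneg hle f₁
  have hP : 0 ≤ (μ ^ 2)⁻¹ * P := mul_nonneg (by positivity) (integral_sq_nonneg hle f)
  have hR : 0 ≤ μ ^ 2 * R := mul_nonneg (by positivity) (integral_sq_nonneg hle f₂)
  have hparts : Q = -(f a * f₁ a) - ∫ x in a..b, f x * f₂ x := by
    rw [integral_mul_eq_sub_of_hasDerivAt_Ioo hle hf₁ hf₂ hf hf₁ hd₁ hd, hb]
    simp only [Q, sq]
    ring
  have hinterior : -(2 * ∫ x in a..b, f x * f₂ x) ≤ (μ ^ 2)⁻¹ * P + μ ^ 2 * R := by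
    rw [← intervalIntegral.integral_const_mul, ← intervalIntegral.integral_neg]
    refine integral_le_const_mul_add_const_mul hle (by fun_prop) (by fun_prop) (by fun_prop) _ _
      fun x _ => ?_
    simpa [mul_assoc] using two_mul_mul_le (-f x) (f₂ x) (pow_pos hμ 2)
  have hboundary : -(2 * (f a * f₁ a)) ≤ μ⁻¹ * f a ^ 2 + μ * f₁ a ^ 2 := by
    simpa [mul_assoc] using two_mul_mul_le (-f a) (f₁ a) hμ
  have hfa : μ⁻¹ * f a ^ 2 ≤ 4 * ((μ ^ 2)⁻¹ * P) + Q / 4 := by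
    refine (mul_le_mul_of_nonneg_left (sq_le_of_right_eq_zero hle hf hf₁ hd hb
      (show 0 < μ / 4 by positivity)) (inv_pos.2 hμ).le).trans_eq ?_
    simp only [P, Q]
    field_simp
  have hf₁a : μ * f₁ a ^ 2 ≤ Q / 4 + 8 * (μ ^ 2 * R) := by
    have h := length_mul_sq_le hle hf₁ hf₂ hd₁ (show 0 < 8 * μ by positivity)
    have hscale : μ * (1 + (b - a) * (8 * μ)⁻¹) ≤ (b - a) / 4 := by
      field_simp
      linarith
    refine le_of_mul_le_mul_left ?_ hℓ
    nlinarith [mul_le_mul_of_nonneg_left h hμ.le, mul_le_mul_of_nonneg_right hscale hQ]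
  rw [div_eq_mul_inv]
  linarith [hP, hR]

end IntegralEstimates

theorem integral_integral_swap_of_continuous {F : ℝ → ℝ → ℝ}
    (hF : Continuous (Function.uncurry F)) (a b c d : ℝ) :
    ∫ x in a..b, ∫ y in c..d, F x y = ∫ y in c..d, ∫ x in a..b, F x y :=
  intervalIntegral_intervalIntegral_swap <|
    (hF.continuousOn.integrableOn_compact (isCompact_uIcc.prod isCompact_uIcc)).mono_set
      (prod_mono uIoc_subset_uIcc uIoc_subset_uIcc)

theorem hasDerivAt_integral_of_continuous {a b : ℝ} {F G : ℝ → ℝ → ℝ} {t : ℝ}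
    (hF : ∀ t, Continuous (F t)) (hG : Continuous (Function.uncurry G))
    (hd : ∀ t x, HasDerivAt (fun s => F s x) (G t x) t) :
    HasDerivAt (fun s => ∫ x in a..b, F s x) (∫ x in a..b, G t x) t := by
  obtain ⟨C, hC⟩ := ((isCompact_Icc (a := t - 1) (b := t + 1)).prod
    (isCompact_uIcc (a := a) (b := b))).exists_bound_of_continuousOn hG.continuousOn
  refine (intervalIntegral.hasDerivAt_integral_of_dominated_loc_of_deriv_le
    (Icc_mem_nhds (sub_one_lt t) (lt_add_one t)) ?_ ?_ ?_ (bound := fun _ => C) ?_ ?_ ?_).2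
  · exact .of_forall fun s => (hF s).aestronglyMeasurable
  · exact (hF t).intervalIntegrable _ _
  · exact (show Continuous (G t) by fun_prop).aestronglyMeasurable
  · exact .of_forall fun x hx s hs => hC (s, x) ⟨hs, uIoc_subset_uIcc hx⟩
  · exact intervalIntegrable_const
  · exact .of_forall fun x _ s _ => hd s x

theorem antitoneOn_Icc_of_hasDerivAt_nonpos {a b : ℝ} {f f' : ℝ → ℝ}
    (hd : ∀ t ∈ Icc a b, HasDerivAt f (f' t) t) (hf' : ∀ t ∈ Ioo a b, f' t ≤ 0) :
    AntitoneOn f (Icc a b) :=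
  antitoneOn_of_hasDerivWithinAt_nonpos (convex_Icc a b)
    (fun t ht => (hd t ht).continuousAt.continuousWithinAt)
    (fun t ht => (hd t (interior_subset ht)).hasDerivWithinAt)
    fun t ht => hf' t (by rwa [interior_Icc] at ht)

/-! ### Functions satisfying the boundary conditions -/

/-- A function on `[0, L]` with its first three derivatives, subject to the boundary conditions of
the linearized KdV system. All four functions are taken to be continuous on the whole line, which
is no restriction, since they may be extended by constants. -/
structure Profile (L : ℝ) (u u₁ u₂ u₃ : ℝ → ℝ) : Prop where
  continuous : Continuous u
  continuous₁ : Continuous u₁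
  continuous₂ : Continuous u₂
  continuous₃ : Continuous u₃
  hasDerivAt : ∀ x ∈ Ioo 0 L, HasDerivAt u (u₁ x) x
  hasDerivAt₁ : ∀ x ∈ Ioo 0 L, HasDerivAt u₁ (u₂ x) x
  hasDerivAt₂ : ∀ x ∈ Ioo 0 L, HasDerivAt u₂ (u₃ x) x
  left : u 0 = 0
  right : u L = 0
  deriv_right : u₁ L = 0

namespace Profile

variable {L : ℝ} {u u₁ u₂ u₃ g g₁ : ℝ → ℝ}

theorem sub {w w₁ w₂ w₃ : ℝ → ℝ} (hu : Profile L u u₁ u₂ u₃) (hw : Profile L w w₁ w₂ w₃) :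
    Profile L (fun x => u x - w x) (fun x => u₁ x - w₁ x) (fun x => u₂ x - w₂ x)
      (fun x => u₃ x - w₃ x) where
  continuous := hu.continuous.sub hw.continuous
  continuous₁ := hu.continuous₁.sub hw.continuous₁
  continuous₂ := hu.continuous₂.sub hw.continuous₂
  continuous₃ := hu.continuous₃.sub hw.continuous₃
  hasDerivAt x hx := (hu.hasDerivAt x hx).sub (hw.hasDerivAt x hx)
  hasDerivAt₁ x hx := (hu.hasDerivAt₁ x hx).sub (hw.hasDerivAt₁ x hx)
  hasDerivAt₂ x hx := (hu.hasDerivAt₂ x hx).sub (hw.hasDerivAt₂ x hx)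
  left := by simp [hu.left, hw.left]
  right := by simp [hu.right, hw.right]
  deriv_right := by simp [hu.deriv_right, hw.deriv_right]

theorem const_mul (hu : Profile L u u₁ u₂ u₃) (c : ℝ) :
    Profile L (fun x => c * u x) (fun x => c * u₁ x) (fun x => c * u₂ x) (fun x => c * u₃ x) where
  continuous := continuous_const.mul hu.continuous
  continuous₁ := continuous_const.mul hu.continuous₁
  continuous₂ := continuous_const.mul hu.continuous₂
  continuous₃ := continuous_const.mul hu.continuous₃
  hasDerivAt x hx := (hu.hasDerivAt x hx).const_mul c
  hasDerivAt₁ x hx := (hu.hasDerivAt₁ x hx).const_mul c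
  hasDerivAt₂ x hx := (hu.hasDerivAt₂ x hx).const_mul c
  left := by simp [hu.left]
  right := by simp [hu.right]
  deriv_right := by simp [hu.deriv_right]

theorem integral_affine_mul (hL : 0 ≤ L) (hu : Profile L u u₁ u₂ u₃) (a b : ℝ) :
    ∫ x in (0 : ℝ)..L, (a + b * x) * (2 * u x * (u₁ x + u₃ x)) =
      a * u₁ 0 ^ 2 - b * (∫ x in (0 : ℝ)..L, u x ^ 2) + 3 * b * ∫ x in (0 : ℝ)..L, u₁ x ^ 2 := by
  obtain ⟨hc, hc₁, hc₂, hc₃, hd, hd₁, hd₂, h0, hL0, hL1⟩ := hu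
  have h := integral_eq_sub_of_hasDerivAt_Ioo
    (f := fun x => (a + b * x) * (u x ^ 2 + 2 * (u x * u₂ x) - u₁ x ^ 2) - 2 * b * (u x * u₁ x))
    (f₁ := fun x => (a + b * x) * (2 * u x * (u₁ x + u₃ x)) + (b * u x ^ 2 + -(3 * b) * u₁ x ^ 2))
    hL (by fun_prop) (by fun_prop) fun x hx => by
      have hw := ((hasDerivAt_id' x).const_mul b).const_add a
      have hflux := (((hd x hx).fun_pow 2).add
        (((hd x hx).fun_mul (hd₂ x hx)).const_mul 2)).sub ((hd₁ x hx).fun_pow 2)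
      refine ((hw.fun_mul hflux).sub
        (((hd x hx).fun_mul (hd₁ x hx)).const_mul (2 * b))).congr_deriv ?_
      simp only [Pi.add_apply, Pi.sub_apply]
      push_cast
      ring
  rw [integral_add_of_continuous (by fun_prop) (by fun_prop),
    integral_add_of_continuous (by fun_prop) (by fun_prop)] at h
  simp only [intervalIntegral.integral_const_mul, h0, hL0, hL1] at h
  linarith

theorem integral_deriv_sq_eq (hL : 0 ≤ L) (hu : Profile L u u₁ u₂ u₃) :
    ∫ x in (0 : ℝ)..L, u₁ x ^ 2 = -∫ x in (0 : ℝ)..L, u x * u₂ x := by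
  rw [integral_mul_eq_sub_of_hasDerivAt_Ioo hL hu.continuous₁ hu.continuous₂ hu.continuous
    hu.continuous₁ hu.hasDerivAt₁ hu.hasDerivAt, hu.left, hu.right]
  simp only [sq]
  ring

theorem integral_deriv₂_sq_le {ε : ℝ} (hu : Profile L u u₁ u₂ u₃) (hε : 0 < ε)
    (hL : 8 * √ε ≤ L) :
    ∫ x in (0 : ℝ)..L, u₂ x ^ 2 ≤
      6 * ε * (∫ x in (0 : ℝ)..L, u₃ x ^ 2) + 4 / ε * ∫ x in (0 : ℝ)..L, u₁ x ^ 2 :=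
  integral_deriv_sq_le hu.continuous₁ hu.continuous₂ hu.continuous₃ hu.hasDerivAt₁ hu.hasDerivAt₂
    hu.deriv_right hε (by rwa [sub_zero])

theorem integral_deriv₃_sq_le (hL : 0 ≤ L) (hu : Profile L u u₁ u₂ u₃) (hg : Continuous g)
    (hgu : ∀ x ∈ Icc 0 L, g x = -(u₁ x + u₃ x)) :
    ∫ x in (0 : ℝ)..L, u₃ x ^ 2 ≤
      2 * (∫ x in (0 : ℝ)..L, g x ^ 2) + 2 * ∫ x in (0 : ℝ)..L, u₁ x ^ 2 := by
  obtain ⟨-, hc₁, -, hc₃, -⟩ := hu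
  refine integral_le_const_mul_add_const_mul hL (by fun_prop) (by fun_prop) (by fun_prop) _ _
    fun x hx => ?_
  rw [hgu x hx]
  nlinarith [sq_nonneg (u₃ x + 2 * u₁ x)]

theorem integral_deriv_sq_le_of_eq_neg (hL : 0 ≤ L) (hu : Profile L u u₁ u₂ u₃) (hg : Continuous g)
    (hgu : ∀ x ∈ Icc 0 L, g x = -(u₁ x + u₃ x)) {ρ : ℝ} (hρ : 0 < ρ) (hρ' : 14 * ρ ≤ 1)
    (hρL : 512 * ρ ≤ L ^ 2) :
    ∫ x in (0 : ℝ)..L, u₁ x ^ 2 ≤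
      ρ⁻¹ * (∫ x in (0 : ℝ)..L, u x ^ 2) + 96 * ρ ^ 2 * ∫ x in (0 : ℝ)..L, g x ^ 2 := by
  have h₃ := hu.integral_deriv₃_sq_le hL hg hgu
  have h₂ := hu.integral_deriv₂_sq_le (show 0 < 8 * ρ by positivity) (by
    rw [← le_div_iff₀' (by norm_num)]
    exact Real.sqrt_le_iff.2 ⟨by positivity, by linarith⟩)
  have h₁ := hu.integral_deriv_sq_eq hL
  obtain ⟨hc, -, hc₂, -⟩ := hu
  set P := ∫ x in (0 : ℝ)..L, u₁ x ^ 2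
  have hP : 0 ≤ P := integral_sq_nonneg hL u₁
  have hyoung : 2 * P ≤ ρ⁻¹ * (∫ x in (0 : ℝ)..L, u x ^ 2) + ρ * ∫ x in (0 : ℝ)..L, u₂ x ^ 2 := by
    rw [h₁, mul_neg, ← intervalIntegral.integral_const_mul, ← intervalIntegral.integral_neg]
    refine integral_le_const_mul_add_const_mul hL (by fun_prop) (by fun_prop) (by fun_prop) _ _
      fun x _ => ?_
    simpa [mul_assoc] using two_mul_mul_le (-u x) (u₂ x) hρ
  have hρ₂ : ρ * ∫ x in (0 : ℝ)..L, u₂ x ^ 2 ≤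
      96 * ρ ^ 2 * (∫ x in (0 : ℝ)..L, g x ^ 2) + 96 * ρ ^ 2 * P + P / 2 :=
    calc _ ≤ ρ * (6 * (8 * ρ) * (2 * (∫ x in (0 : ℝ)..L, g x ^ 2) + 2 * P) + 4 / (8 * ρ) * P) := by
          gcongr
          exact h₂.trans (by gcongr)
      _ = _ := by field_simp; ring
  have hρsq : 96 * ρ ^ 2 ≤ 1 / 2 := by nlinarith
  linarith [mul_le_mul_of_nonneg_right hρsq hP]

theorem integral_sq_le_of_eq_neg (hu : Profile L u u₁ u₂ u₃) (hg : Continuous g)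
    (hg₁ : Continuous g₁) (hgd : ∀ x ∈ Ioo 0 L, HasDerivAt g (g₁ x) x) (hg0 : g 0 = 0)
    (hgL : g L = 0) (hgu : ∀ x ∈ Icc 0 L, g x = -(u₁ x + u₃ x)) (hL : 0 < L) {δ : ℝ} (hδ : 0 < δ)
    (hδL : 8 * δ ≤ 3 * L ^ 2) :
    ∫ x in (0 : ℝ)..L, g x ^ 2 ≤
      (3 + 96 / δ ^ 2) * (∫ x in (0 : ℝ)..L, u₁ x ^ 2) + δ * ∫ x in (0 : ℝ)..L, g₁ x ^ 2 := by
  have h₃ := hu.integral_deriv₃_sq_le hL.le hg hgu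
  have h₂ := hu.integral_deriv₂_sq_le (show 0 < δ / 24 by positivity) (by
    rw [← le_div_iff₀' (by norm_num)]
    exact Real.sqrt_le_iff.2 ⟨by positivity, by linarith⟩)
  obtain ⟨-, hc₁, hc₂, hc₃, -, -, hd₂, -⟩ := hu
  set P := ∫ x in (0 : ℝ)..L, u₁ x ^ 2
  set G := ∫ x in (0 : ℝ)..L, g x ^ 2
  have hP : 0 ≤ P := integral_sq_nonneg hL.le u₁
  have hparts : G = (∫ x in (0 : ℝ)..L, -(g x * u₁ x)) + ∫ x in (0 : ℝ)..L, g₁ x * u₂ x := by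
    have h := integral_mul_eq_sub_of_hasDerivAt_Ioo hL.le hc₂ hc₃ hg hg₁ hd₂ hgd
    rw [hg0, hgL, zero_mul, zero_mul, sub_zero, zero_sub] at h
    rw [← neg_eq_iff_eq_neg.2 h, ← intervalIntegral.integral_neg,
      ← integral_add_of_continuous (by fun_prop) (by fun_prop)]
    refine intervalIntegral.integral_congr fun x hx => ?_
    rw [uIcc_of_le hL.le] at hx
    simp only [hgu x hx]
    ring
  have hgu₁ : ∫ x in (0 : ℝ)..L, -(g x * u₁ x) ≤ 1 / 4 * G + 1 * P :=
    integral_le_const_mul_add_const_mul hL.le (by fun_prop) (by fun_prop) (by fun_prop) _ _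
      fun x _ => by nlinarith [sq_nonneg (g x / 2 + u₁ x)]
  have hg₁u₂ : ∫ x in (0 : ℝ)..L, g₁ x * u₂ x ≤
      δ / 2 * (∫ x in (0 : ℝ)..L, g₁ x ^ 2) + δ⁻¹ / 2 * ∫ x in (0 : ℝ)..L, u₂ x ^ 2 :=
    integral_le_const_mul_add_const_mul hL.le (by fun_prop) (by fun_prop) (by fun_prop) _ _
      fun x _ => by linarith [two_mul_mul_le (u₂ x) (g₁ x) hδ]
  have hδ₂ : δ⁻¹ / 2 * ∫ x in (0 : ℝ)..L, u₂ x ^ 2 ≤ G / 4 + P / 4 + 48 / δ ^ 2 * P :=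
    calc _ ≤ δ⁻¹ / 2 * (6 * (δ / 24) * (2 * G + 2 * P) + 4 / (δ / 24) * P) := by
          gcongr
          exact h₂.trans (by gcongr)
      _ = _ := by field_simp; ring
  linarith [show (3 + 96 / δ ^ 2) * P = 3 * P + 2 * (48 / δ ^ 2 * P) by ring]

end Profile

/-! ### The Lyapunov function of a regular solution -/

/-- A solution of the linearized KdV system on `[a, b] × [0, L]` whose space derivatives `u₁`, `u₂`,
`u₃` and time derivative `v` are jointly continuous. As in `Profile`, the functions are extended to
the whole plane; the equation is only required on the rectangle. -/
structure RegularSolution (L a b : ℝ) (u u₁ u₂ u₃ v : ℝ → ℝ → ℝ) : Prop where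
  continuous : Continuous (Function.uncurry u)
  continuous₁ : Continuous (Function.uncurry u₁)
  continuous₂ : Continuous (Function.uncurry u₂)
  continuous₃ : Continuous (Function.uncurry u₃)
  continuous_time : Continuous (Function.uncurry v)
  profile : ∀ t ∈ Icc a b, Profile L (u t) (u₁ t) (u₂ t) (u₃ t)
  hasDerivAt_time : ∀ t x, HasDerivAt (fun s => u s x) (v t x) t
  eq_neg : ∀ t ∈ Icc a b, ∀ x ∈ Icc 0 L, v t x = -(u₁ t x + u₃ t x)

namespace RegularSolution

variable {L a b : ℝ} {u u₁ u₂ u₃ v v₁ v₂ v₃ w : ℝ → ℝ → ℝ}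

theorem hasDerivAt_integral_affine_mul_sq (hL : 0 ≤ L) (hu : RegularSolution L a b u u₁ u₂ u₃ v)
    (c d : ℝ) {t : ℝ} (ht : t ∈ Icc a b) :
    HasDerivAt (fun t => ∫ x in (0 : ℝ)..L, (c + d * x) * u t x ^ 2)
      (d * (∫ x in (0 : ℝ)..L, u t x ^ 2) - 3 * d * (∫ x in (0 : ℝ)..L, u₁ t x ^ 2)
        - c * u₁ t 0 ^ 2) t := by
  have hp := hu.profile t ht
  have heq := hu.eq_neg t ht
  obtain ⟨hc, -, -, -, hcv, -, hdt, -⟩ := hu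
  refine (hasDerivAt_integral_of_continuous (G := fun t x => (c + d * x) * (2 * u t x * v t x))
    (by fun_prop) (by fun_prop) fun t x => ?_).congr_deriv ?_
  · simpa using ((hdt t x).fun_pow 2).const_mul (c + d * x)
  · have h := hp.integral_affine_mul hL c d
    rw [show ∫ x in (0 : ℝ)..L, (c + d * x) * (2 * u t x * v t x) =
      -∫ x in (0 : ℝ)..L, (c + d * x) * (2 * u t x * (u₁ t x + u₃ t x)) from ?_, h]
    · ring
    rw [← intervalIntegral.integral_neg]
    refine intervalIntegral.integral_congr fun x hx => ?_
    rw [uIcc_of_le hL] at hx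
    simp only [heq x hx]
    ring

theorem antitoneOn_integral_sq (hL : 0 ≤ L) (hu : RegularSolution L a b u u₁ u₂ u₃ v) :
    AntitoneOn (fun t => ∫ x in (0 : ℝ)..L, u t x ^ 2) (Icc a b) := by
  have hd : ∀ t ∈ Icc a b,
      HasDerivAt (fun t => ∫ x in (0 : ℝ)..L, u t x ^ 2) (-u₁ t 0 ^ 2) t := fun t ht => by
    simpa using hu.hasDerivAt_integral_affine_mul_sq hL 1 0 ht
  exact antitoneOn_Icc_of_hasDerivAt_nonpos hd fun t _ => neg_nonpos.2 (sq_nonneg _)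

/- Interpolation bounds `∫ v ^ 2` by the quantities `∫ v₁ ^ 2` and `∫ u₁ ^ 2` that the weights
`1 + x` and `x` dissipate, with a small constant in front of the former. -/
theorem mul_integral_time_deriv_sq_le (hu : RegularSolution L a b u u₁ u₂ u₃ v)
    (hv : RegularSolution L a b v v₁ v₂ v₃ w) (hL : 0 < L) {K T κ t : ℝ} (hK : 0 ≤ K) (hκ : 0 < κ)
    (hκK : K * κ ≤ 3) (hκL : 8 * (κ * T) ≤ 3 * L ^ 2) (ht : 0 < t) (htT : t ≤ T)
    (htab : t ∈ Icc a b) :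
    t ^ 2 * K * (∫ x in (0 : ℝ)..L, v t x ^ 2) ≤ 3 * t ^ 3 * (∫ x in (0 : ℝ)..L, v₁ t x ^ 2) +
      3 * (K * (T ^ 2 + 32 / κ ^ 2)) * ∫ x in (0 : ℝ)..L, u₁ t x ^ 2 := by
  have hpv := hv.profile t htab
  have hinterp := (hu.profile t htab).integral_sq_le_of_eq_neg hpv.continuous hpv.continuous₁
    hpv.hasDerivAt hpv.left hpv.right (hu.eq_neg t htab) hL (mul_pos hκ ht)
    (by linarith [mul_le_mul_of_nonneg_left htT hκ.le])
  set P := ∫ x in (0 : ℝ)..L, u₁ t x ^ 2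
  set Q := ∫ x in (0 : ℝ)..L, v₁ t x ^ 2
  have hP : 0 ≤ P := integral_sq_nonneg hL.le _
  have hQ : 0 ≤ t ^ 3 * Q := mul_nonneg (by positivity) (integral_sq_nonneg hL.le _)
  calc t ^ 2 * K * (∫ x in (0 : ℝ)..L, v t x ^ 2)
      ≤ t ^ 2 * K * ((3 + 96 / (κ * t) ^ 2) * P + κ * t * Q) := by gcongr
    _ = K * κ * (t ^ 3 * Q) + 3 * (K * (t ^ 2 + 32 / κ ^ 2)) * P := by field_simp; ring
    _ ≤ 3 * (t ^ 3 * Q) + 3 * (K * (T ^ 2 + 32 / κ ^ 2)) * P := by gcongr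
    _ = 3 * t ^ 3 * Q + 3 * (K * (T ^ 2 + 32 / κ ^ 2)) * P := by ring

/- `t ^ 3 * ∫ (1 + x) * v ^ 2 + c * ∫ x * u ^ 2 - c * t * ∫ u 0 ^ 2` is nonincreasing. -/
theorem cube_mul_integral_time_deriv_sq_le (hu : RegularSolution L 0 b u u₁ u₂ u₃ v)
    (hv : RegularSolution L 0 b v v₁ v₂ v₃ w) (hL : 0 < L) {K T κ : ℝ} (hbT : b ≤ T)
    (hK : 3 * (1 + L) + T ≤ K) (hκ : 0 < κ) (hκK : K * κ ≤ 3) (hκL : 8 * (κ * T) ≤ 3 * L ^ 2)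
    {t : ℝ} (ht : t ∈ Icc 0 b) :
    t ^ 3 * (∫ x in (0 : ℝ)..L, v t x ^ 2) ≤
      K * (T ^ 2 + 32 / κ ^ 2) * (L + T) * ∫ x in (0 : ℝ)..L, u 0 x ^ 2 := by
  have h0 : (0 : ℝ) ∈ Icc 0 b := left_mem_Icc.2 (ht.1.trans ht.2)
  have hT : 0 ≤ T := h0.2.trans hbT
  have hK0 : 0 ≤ K := le_trans (by positivity) hK
  set c := K * (T ^ 2 + 32 / κ ^ 2) with hc
  have hc0 : 0 ≤ c := by positivity
  set U := ∫ x in (0 : ℝ)..L, u 0 x ^ 2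
  have hanti := antitoneOn_Icc_of_hasDerivAt_nonpos (fun s hs =>
    (((hasDerivAt_pow 3 s).mul (hv.hasDerivAt_integral_affine_mul_sq hL.le 1 1 hs)).add
      ((hu.hasDerivAt_integral_affine_mul_sq hL.le 0 1 hs).const_mul c)).sub
      ((hasDerivAt_id s).const_mul (c * U))) (fun s hs => ?_) h0 ht ht.1
  · have hUt := le_integral_affine_mul_sq hL.le (hu.profile t ht).continuous 0 zero_le_one
    have hU0 := integral_affine_mul_sq_le hL.le (hu.profile 0 h0).continuous 0 zero_le_one
    have hVt := le_integral_affine_mul_sq hL.le (hv.profile t ht).continuous 1 zero_le_one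
    have hUnn : 0 ≤ U := integral_sq_nonneg hL.le _
    simp only [Pi.sub_apply, Pi.add_apply, Pi.mul_apply, id] at hanti
    linarith [mul_le_mul_of_nonneg_left hUt hc0, mul_le_mul_of_nonneg_left hU0 hc0,
      mul_le_mul_of_nonneg_left hVt (pow_nonneg ht.1 3),
      mul_le_mul_of_nonneg_right (ht.2.trans hbT) (mul_nonneg hc0 hUnn)]
  · have hs' := Ioo_subset_Icc_self hs
    have hsT : s ≤ T := hs'.2.trans hbT
    have hdiss := hu.mul_integral_time_deriv_sq_le hv hL hK0 hκ hκK hκL hs.1 hsT hs'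
    have henergy : ∫ x in (0 : ℝ)..L, u s x ^ 2 ≤ U :=
      hu.antitoneOn_integral_sq hL.le h0 hs' hs'.1
    have hweight := integral_affine_mul_sq_le hL.le (hv.profile s hs').continuous 1 zero_le_one
    have hG : 0 ≤ ∫ x in (0 : ℝ)..L, v s x ^ 2 := integral_sq_nonneg hL.le _
    have hKs : s ^ 2 * (3 * (1 + L) + s) ≤ s ^ 2 * K := by gcongr; linarith
    norm_num at hweight ⊢
    rw [← hc] at hdiss
    linarith [mul_le_mul_of_nonneg_left hweight (show 0 ≤ 3 * s ^ 2 by positivity),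
      mul_le_mul_of_nonneg_right hKs hG, mul_le_mul_of_nonneg_left henergy hc0,
      mul_nonneg (pow_nonneg hs'.1 3) (sq_nonneg (v₁ s 0))]

theorem exists_integral_deriv_sq_le_div (hL : 0 < L) {T : ℝ} (hT : 0 < T) :
    ∃ C > 0, ∀ (b : ℝ) (u u₁ u₂ u₃ v v₁ v₂ v₃ w : ℝ → ℝ → ℝ), b ≤ T →
      RegularSolution L 0 b u u₁ u₂ u₃ v → RegularSolution L 0 b v v₁ v₂ v₃ w → ∀ t ∈ Ioc 0 b,
        ∫ x in (0 : ℝ)..L, u₁ t x ^ 2 ≤ C / t * ∫ x in (0 : ℝ)..L, u 0 x ^ 2 := by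
  set K := 3 * (1 + L) + T
  set κ := min (3 / K) (min (1 / (14 * T)) (L ^ 2 / (512 * T)))
  have hK0 : 0 < K := by positivity
  have hκ : 0 < κ := by positivity
  have hκK : K * κ ≤ 3 := (le_div_iff₀' hK0).1 (min_le_left _ _)
  have hκ₁ : 14 * (κ * T) ≤ 1 := by
    have : κ ≤ 1 / (14 * T) := (min_le_right _ _).trans (min_le_left _ _)
    linarith [(le_div_iff₀ (by positivity)).1 this]
  have hκ₂ : 512 * (κ * T) ≤ L ^ 2 := by
    have : κ ≤ L ^ 2 / (512 * T) := (min_le_right _ _).trans (min_le_right _ _)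
    linarith [(le_div_iff₀ (by positivity)).1 this]
  set C := K * (T ^ 2 + 32 / κ ^ 2) * (L + T)
  refine ⟨κ⁻¹ + 96 * κ ^ 2 * C, by positivity, ?_⟩
  intro b u u₁ u₂ u₃ v v₁ v₂ v₃ w hbT hu hv t ht
  have ht' := Ioc_subset_Icc_self ht
  have ht0 := ht.1
  have htT : κ * t ≤ κ * T := by gcongr; exact ht.2.trans hbT
  have hcube := hu.cube_mul_integral_time_deriv_sq_le hv hL hbT le_rfl hκ hκK
    (by linarith [sq_nonneg L]) ht'
  have hinterp := (hu.profile t ht').integral_deriv_sq_le_of_eq_neg hL.le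
    (hv.profile t ht').continuous (hu.eq_neg t ht') (mul_pos hκ ht.1) (by linarith) (by linarith)
  set U := ∫ x in (0 : ℝ)..L, u 0 x ^ 2
  calc _ ≤ _ := hinterp
    _ = (κ * t)⁻¹ * (∫ x in (0 : ℝ)..L, u t x ^ 2)
        + 96 * κ ^ 2 / t * (t ^ 3 * ∫ x in (0 : ℝ)..L, v t x ^ 2) := by field_simp
    _ ≤ (κ * t)⁻¹ * U + 96 * κ ^ 2 / t * (C * U) := by
      gcongr
      exact hu.antitoneOn_integral_sq hL.le (left_mem_Icc.2 (ht'.1.trans ht'.2)) ht' ht'.1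
    _ = _ := by field_simp

end RegularSolution

/-! ### Mild solutions and time averages -/

section IteratedPrimitives

variable {f : ℝ → ℝ}

theorem integral_max_sub_pow_mul {b x : ℝ} (hx : x ∈ Icc 0 b) (hf : Continuous f) (n : ℕ) :
    ∫ y in (0 : ℝ)..b, max (y - x) 0 ^ (n + 1) * f y = ∫ y in x..b, (y - x) ^ (n + 1) * f y := by
  rw [← intervalIntegral.integral_add_adjacent_intervals (b := x)
    (Continuous.intervalIntegrable (by fun_prop) _ _)
    (Continuous.intervalIntegrable (by fun_prop) _ _)]
  have hleft : ∫ y in (0 : ℝ)..x, max (y - x) 0 ^ (n + 1) * f y = ∫ y in (0 : ℝ)..x, 0 := by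
    refine intervalIntegral.integral_congr fun y hy => ?_
    rw [uIcc_of_le hx.1] at hy
    simp [max_eq_right (sub_nonpos.2 hy.2)]
  have hright :
      ∫ y in x..b, max (y - x) 0 ^ (n + 1) * f y = ∫ y in x..b, (y - x) ^ (n + 1) * f y := by
    refine intervalIntegral.integral_congr fun y hy => ?_
    rw [uIcc_of_le hx.2] at hy
    simp only [max_eq_left (sub_nonneg.2 hy.1)]
  rw [hleft, hright, intervalIntegral.integral_zero, zero_add]

theorem hasDerivAt_integral_left (hf : Continuous f) (b x : ℝ) :
    HasDerivAt (fun x => ∫ y in x..b, f y) (-f x) x :=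
  intervalIntegral.integral_hasDerivAt_left (hf.intervalIntegrable _ _)
    (hf.stronglyMeasurableAtFilter _ _) hf.continuousAt

theorem integral_sub_pow_succ_mul (hf : Continuous f) (b x : ℝ) (n : ℕ) :
    ∫ y in x..b, (y - x) ^ (n + 1) * f y =
      (∫ y in x..b, (y - x) ^ n * (y * f y)) - x * ∫ y in x..b, (y - x) ^ n * f y := by
  rw [← intervalIntegral.integral_const_mul,
    ← integral_sub_of_continuous (by fun_prop) (by fun_prop)]
  refine intervalIntegral.integral_congr fun y _ => ?_
  ring

theorem hasDerivAt_integral_sub_pow_mul (hf : Continuous f) (b : ℝ) (n : ℕ) (x : ℝ) :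
    HasDerivAt (fun x => ∫ y in x..b, (y - x) ^ (n + 1) * f y)
      (-((n + 1) * ∫ y in x..b, (y - x) ^ n * f y)) x := by
  simp only [integral_sub_pow_succ_mul hf]
  induction n generalizing f with
  | zero =>
    simp only [pow_zero, one_mul]
    refine ((hasDerivAt_integral_left (f := fun y => y * f y) (by fun_prop) b x).sub
      ((hasDerivAt_id' x).mul (hasDerivAt_integral_left hf b x))).congr_deriv ?_
    push_cast
    ring
  | succ n ih =>
    have hxf := ih (f := fun y => y * f y) (by fun_prop)
    simp only [← integral_sub_pow_succ_mul (f := fun y => y * f y) (by fun_prop)] at hxf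
    have hf' := ih hf
    simp only [← integral_sub_pow_succ_mul hf] at hf'
    refine (hxf.sub ((hasDerivAt_id' x).mul hf')).congr_deriv ?_
    rw [integral_sub_pow_succ_mul hf b x n]
    push_cast
    ring

end IteratedPrimitives

/-- The Green function of `d³/dx³` on `(0, L)`, as a function of `y` for fixed `x`: it vanishes to
second order at `y = 0` and, thanks to its second term, also in `x` at the endpoints, so that
pairing it with `u₃` recovers a `Profile` from its third derivative. -/
noncomputable def greenKernel (L x y : ℝ) : ℝ :=
  max (y - x) 0 ^ 2 / 2 - (L - x) ^ 2 / L ^ 2 * (y ^ 2 / 2)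

/-- The derivative of `greenKernel` in the variable `y`. -/
noncomputable def greenKernelDeriv (L x y : ℝ) : ℝ :=
  max (y - x) 0 - (L - x) ^ 2 / L ^ 2 * y

@[fun_prop]
theorem continuous_greenKernel (L x : ℝ) : Continuous (greenKernel L x) := by
  unfold greenKernel
  fun_prop

@[fun_prop]
theorem continuous_greenKernelDeriv (L x : ℝ) : Continuous (greenKernelDeriv L x) := by
  unfold greenKernelDeriv
  fun_prop

section Green

variable {L x : ℝ} {f : ℝ → ℝ}

theorem integral_greenKernel_mul (hx : x ∈ Icc 0 L) (hf : Continuous f) :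
    ∫ y in (0 : ℝ)..L, greenKernel L x y * f y = (∫ y in x..L, (y - x) ^ 2 * f y) / 2
      - (L - x) ^ 2 / L ^ 2 * ((∫ y in (0 : ℝ)..L, y ^ 2 * f y) / 2) := by
  rw [← integral_max_sub_pow_mul hx hf 1, ← intervalIntegral.integral_div,
    ← intervalIntegral.integral_div, ← intervalIntegral.integral_const_mul,
    ← integral_sub_of_continuous (by fun_prop) (by fun_prop)]
  refine intervalIntegral.integral_congr fun y _ => ?_
  simp only [greenKernel]
  ring

theorem integral_greenKernelDeriv_mul (hx : x ∈ Icc 0 L) (hf : Continuous f) :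
    ∫ y in (0 : ℝ)..L, greenKernelDeriv L x y * f y = (∫ y in x..L, (y - x) * f y)
      - (L - x) ^ 2 / L ^ 2 * ∫ y in (0 : ℝ)..L, y * f y := by
  have h := integral_max_sub_pow_mul hx hf 0
  simp only [zero_add, pow_one] at h
  rw [← h, ← intervalIntegral.integral_const_mul,
    ← integral_sub_of_continuous (by fun_prop) (by fun_prop)]
  refine intervalIntegral.integral_congr fun y _ => ?_
  simp only [greenKernelDeriv]
  ring

variable {u u₁ u₂ u₃ : ℝ → ℝ}

theorem Profile.integral_sub_sq_mul (hu : Profile L u u₁ u₂ u₃) (hx : x ∈ Icc 0 L) :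
    (∫ y in x..L, (y - x) ^ 2 * (u₁ y + u₃ y)) / 2 =
      (L - x) ^ 2 / 2 * u₂ L - u x - ∫ y in x..L, (y - x) * u y := by
  obtain ⟨hc, hc₁, hc₂, hc₃, hd, hd₁, hd₂, -, hL, hL₁⟩ := hu
  have h := integral_eq_sub_of_hasDerivAt_Ioo
    (f := fun y => (y - x) ^ 2 / 2 * (u₂ y + u y) - (y - x) * u₁ y + u y)
    (f₁ := fun y => (y - x) ^ 2 * (u₁ y + u₃ y) / 2 + (y - x) * u y)
    hx.2 (by fun_prop) (by fun_prop) fun y hy => by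
      have hy' : y ∈ Ioo 0 L := ⟨hx.1.trans_lt hy.1, hy.2⟩
      have hyx := (hasDerivAt_id' y).sub_const x
      refine (((((hyx.fun_pow 2).div_const 2).fun_mul ((hd₂ y hy').fun_add (hd y hy'))).fun_sub
        (hyx.fun_mul (hd₁ y hy'))).fun_add (hd y hy')).congr_deriv ?_
      push_cast
      ring
  rw [integral_add_of_continuous (by fun_prop) (by fun_prop),
    intervalIntegral.integral_div, hL, hL₁] at h
  linarith

theorem Profile.integral_greenKernel_mul (hL : 0 < L) (hu : Profile L u u₁ u₂ u₃)
    (hx : x ∈ Icc 0 L) :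
    ∫ y in (0 : ℝ)..L, greenKernel L x y * (u₁ y + u₃ y) =
      -u x - ∫ y in (0 : ℝ)..L, greenKernelDeriv L x y * u y := by
  have hatx := hu.integral_sub_sq_mul hx
  have hat0 := hu.integral_sub_sq_mul (left_mem_Icc.2 hL.le)
  obtain ⟨hc, hc₁, -, hc₃, -, -, -, h0, -⟩ := hu
  rw [LinearKdV.integral_greenKernel_mul hx (by fun_prop), integral_greenKernelDeriv_mul hx hc]
  simp only [sub_zero, h0] at hat0
  rw [hatx, hat0]
  field_simp
  ring

end Green

/-- A function satisfying the linearized KdV system in integrated form: `z_t = -(z_x + z_xxx)` has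
been paired with the Green kernel in space and integrated in time, so that no derivative of `z`
appears. -/
structure MildSolution (L a b : ℝ) (z : ℝ → ℝ → ℝ) : Prop where
  continuous : Continuous (Function.uncurry z)
  left : ∀ t ∈ Icc a b, z t 0 = 0
  right : ∀ t ∈ Icc a b, z t L = 0
  integral_greenKernel_mul_sub : ∀ s t, a ≤ s → s ≤ t → t ≤ b → ∀ x ∈ Icc 0 L,
    ∫ y in (0 : ℝ)..L, greenKernel L x y * (z t y - z s y) =
      ∫ τ in s..t, (z τ x + ∫ y in (0 : ℝ)..L, greenKernelDeriv L x y * z τ y)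

/-- The forward time average of `z` over `[t, t + h]`, normalised so that it makes sense, and is
continuous in `h`, also at `h = 0`. -/
noncomputable def timeAverage (h : ℝ) (z : ℝ → ℝ → ℝ) (t x : ℝ) : ℝ :=
  ∫ ρ in (0 : ℝ)..1, z (t + h * ρ) x

section TimeAverage

variable {h : ℝ} {z : ℝ → ℝ → ℝ}

theorem continuous_timeAverage (h : ℝ) (hz : Continuous (Function.uncurry z)) :
    Continuous (Function.uncurry (timeAverage h z)) := by
  simp only [timeAverage, Function.uncurry_def]
  fun_prop

theorem timeAverage_zero (z : ℝ → ℝ → ℝ) : timeAverage 0 z = z := by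
  ext t x
  simp [timeAverage]

theorem mul_timeAverage (h : ℝ) (z : ℝ → ℝ → ℝ) (t x : ℝ) :
    h * timeAverage h z t x = ∫ τ in t..t + h, z τ x := by
  simpa [timeAverage] using
    intervalIntegral.smul_integral_comp_add_mul (a := 0) (b := 1) (fun τ => z τ x) h t

theorem hasDerivAt_timeAverage (hh : h ≠ 0) (hz : Continuous (Function.uncurry z)) (t x : ℝ) :
    HasDerivAt (fun s => timeAverage h z s x) (h⁻¹ * (z (t + h) x - z t x)) t := by
  have hzx : Continuous fun τ => z τ x := by fun_prop
  have hprim (s : ℝ) : HasDerivAt (fun s => ∫ τ in (0 : ℝ)..s, z τ x) (z s x) s :=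
    (hzx.integral_hasStrictDerivAt 0 s).hasDerivAt
  refine ((((hprim (t + h)).comp_add_const t h).sub (hprim t)).const_mul h⁻¹).congr_of_eventuallyEq
    (.of_forall fun s => ?_)
  simp only [Pi.sub_apply]
  rw [intervalIntegral.integral_interval_sub_left (hzx.intervalIntegrable _ _)
    (hzx.intervalIntegrable _ _), ← mul_timeAverage, inv_mul_cancel_left₀ hh]

theorem integral_mul_timeAverage {k : ℝ → ℝ} (hk : Continuous k) (h a b t : ℝ)
    (hz : Continuous (Function.uncurry z)) :
    ∫ y in a..b, k y * timeAverage h z t y =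
      ∫ ρ in (0 : ℝ)..1, ∫ y in a..b, k y * z (t + h * ρ) y := by
  rw [integral_integral_swap_of_continuous (by fun_prop)]
  simp only [timeAverage, intervalIntegral.integral_const_mul]

end TimeAverage

namespace MildSolution

variable {L a b h t x : ℝ} {z : ℝ → ℝ → ℝ}

protected theorem timeAverage (hz : MildSolution L a b z) (hh : 0 ≤ h) :
    MildSolution L a (b - h) (timeAverage h z) := by
  obtain ⟨hc, h0, hL, hmild⟩ := hz
  have hmem : ∀ t ∈ Icc a (b - h), ∀ ρ ∈ uIcc (0 : ℝ) 1, t + h * ρ ∈ Icc a b := by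
    intro t ht ρ hρ
    rw [uIcc_of_le zero_le_one] at hρ
    exact ⟨by linarith [ht.1, mul_nonneg hh hρ.1],
      by linarith [ht.2, mul_le_mul_of_nonneg_left hρ.2 hh]⟩
  have hzero : ∀ y, (∀ t ∈ Icc a b, z t y = 0) → ∀ t ∈ Icc a (b - h), timeAverage h z t y = 0 :=
    fun y hy t ht => (intervalIntegral.integral_congr fun ρ hρ => hy _ (hmem t ht ρ hρ)).trans
      intervalIntegral.integral_zero
  refine ⟨continuous_timeAverage h hc, hzero 0 h0, hzero L hL, fun s t hs hst ht x hx => ?_⟩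
  have hflux (τ : ℝ) :
      timeAverage h z τ x + ∫ y in (0 : ℝ)..L, greenKernelDeriv L x y * timeAverage h z τ y =
        ∫ ρ in (0 : ℝ)..1, (z (τ + h * ρ) x +
          ∫ y in (0 : ℝ)..L, greenKernelDeriv L x y * z (τ + h * ρ) y) := by
    rw [integral_mul_timeAverage (by fun_prop) h 0 L τ hc, timeAverage,
      integral_add_of_continuous (by fun_prop) (by fun_prop)]
  have hdiff : ∫ y in (0 : ℝ)..L, greenKernel L x y * (timeAverage h z t y - timeAverage h z s y) =
      ∫ ρ in (0 : ℝ)..1, ∫ y in (0 : ℝ)..L,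
        greenKernel L x y * (z (t + h * ρ) y - z (s + h * ρ) y) := by
    rw [integral_integral_swap_of_continuous (by fun_prop)]
    refine intervalIntegral.integral_congr fun y _ => ?_
    simp only [timeAverage, intervalIntegral.integral_const_mul]
    rw [integral_sub_of_continuous (by fun_prop) (by fun_prop)]
  simp only [hflux]
  rw [integral_integral_swap_of_continuous (by fun_prop), hdiff]
  refine intervalIntegral.integral_congr fun ρ hρ => ?_
  rw [hmild (s + h * ρ) (t + h * ρ) (hmem s ⟨hs, hst.trans ht⟩ ρ hρ).1 (by linarith)
    (hmem t ⟨hs.trans hst, ht⟩ ρ hρ).2 x hx, intervalIntegral.integral_comp_add_right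
      (fun τ => z τ x + ∫ y in (0 : ℝ)..L, greenKernelDeriv L x y * z τ y)]

end MildSolution

/-- The forward difference quotient in time. -/
noncomputable def timeDifferenceQuotient (h : ℝ) (z : ℝ → ℝ → ℝ) (t x : ℝ) : ℝ :=
  h⁻¹ * (z (t + h) x - z t x)

theorem RegularSolution.timeDifferenceQuotient {L a b h : ℝ} {u u₁ u₂ u₃ v : ℝ → ℝ → ℝ}
    (hu : RegularSolution L a b u u₁ u₂ u₃ v) (hh : 0 ≤ h) :
    RegularSolution L a (b - h) (timeDifferenceQuotient h u) (timeDifferenceQuotient h u₁)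
      (timeDifferenceQuotient h u₂) (timeDifferenceQuotient h u₃) (timeDifferenceQuotient h v) := by
  obtain ⟨hc, hc₁, hc₂, hc₃, hcv, hp, hd, heq⟩ := hu
  have hmem : ∀ t ∈ Icc a (b - h), t ∈ Icc a b ∧ t + h ∈ Icc a b := fun t ht =>
    ⟨⟨ht.1, by linarith [ht.2]⟩, by linarith [ht.1], by linarith [ht.2]⟩
  unfold LinearKdV.timeDifferenceQuotient
  refine ⟨by fun_prop, by fun_prop, by fun_prop, by fun_prop, by fun_prop, fun t ht => ?_,
    fun t x => ?_, fun t ht x hx => ?_⟩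
  · exact ((hp _ (hmem t ht).2).sub (hp t (hmem t ht).1)).const_mul h⁻¹
  · exact (((hd (t + h) x).comp_add_const t h).sub (hd t x)).const_mul h⁻¹
  · rw [heq _ (hmem t ht).2 x hx, heq t (hmem t ht).1 x hx]
    ring

/-- Minus the second derivative at `L` of a profile `u` with `u₁ + u₃ = -f`, computed from its Green
representation. -/
noncomputable def greenConst (L : ℝ) (u f : ℝ → ℝ) : ℝ :=
  ((∫ y in (0 : ℝ)..L, y ^ 2 * f y) - 2 * ∫ y in (0 : ℝ)..L, y * u y) / L ^ 2

/-- The first derivative of a profile `u` with `u₁ + u₃ = -f`, computed from its Green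
representation. -/
noncomputable def greenDeriv₁ (L : ℝ) (u f : ℝ → ℝ) (x : ℝ) : ℝ :=
  (∫ y in x..L, u y) - (∫ y in x..L, (y - x) * f y) + (L - x) * greenConst L u f

/-- The second derivative of a profile `u` with `u₁ + u₃ = -f`, computed from its Green
representation. -/
noncomputable def greenDeriv₂ (L : ℝ) (u f : ℝ → ℝ) (x : ℝ) : ℝ :=
  (∫ y in x..L, f y) - u x - greenConst L u f

section GreenRepresentation

variable {L : ℝ}

theorem continuous_greenDeriv₁ {u f : ℝ → ℝ → ℝ} (hu : Continuous (Function.uncurry u))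
    (hf : Continuous (Function.uncurry f)) :
    Continuous (Function.uncurry fun t => greenDeriv₁ L (u t) (f t)) := by
  simp only [greenDeriv₁, greenConst, intervalIntegral.integral_symm L, Function.uncurry_def]
  fun_prop

theorem continuous_greenDeriv₂ {u f : ℝ → ℝ → ℝ} (hu : Continuous (Function.uncurry u))
    (hf : Continuous (Function.uncurry f)) :
    Continuous (Function.uncurry fun t => greenDeriv₂ L (u t) (f t)) := by
  simp only [greenDeriv₂, greenConst, intervalIntegral.integral_symm L, Function.uncurry_def]
  fun_prop

variable {u f : ℝ → ℝ} {x : ℝ}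

theorem eq_of_integral_greenKernel_mul (hL : 0 < L) (hu : Continuous u) (hf : Continuous f)
    (hx : x ∈ Icc 0 L) (h : ∫ y in (0 : ℝ)..L, greenKernel L x y * f y =
      u x + ∫ y in (0 : ℝ)..L, greenKernelDeriv L x y * u y) :
    u x = (∫ y in x..L, (y - x) ^ 2 * f y) / 2 - (∫ y in x..L, (y - x) * u y)
      - (L - x) ^ 2 / 2 * greenConst L u f := by
  rw [integral_greenKernel_mul hx hf, integral_greenKernelDeriv_mul hx hu] at h
  rw [greenConst]
  field_simp at h ⊢
  linarith

theorem profile_of_integral_greenKernel_mul (hL : 0 < L) (hu : Continuous u) (hf : Continuous f)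
    (hu0 : u 0 = 0) (huL : u L = 0)
    (h : ∀ x ∈ Icc 0 L, ∫ y in (0 : ℝ)..L, greenKernel L x y * f y =
      u x + ∫ y in (0 : ℝ)..L, greenKernelDeriv L x y * u y) :
    Profile L u (greenDeriv₁ L u f) (greenDeriv₂ L u f) fun x => -(f x + greenDeriv₁ L u f x) := by
  have hc₁ : Continuous (greenDeriv₁ L u f) := by
    have := continuous_greenDeriv₁ (L := L) (u := fun _ : ℝ => u) (f := fun _ => f)
      (by fun_prop) (by fun_prop)
    exact this.comp (Continuous.prodMk_right 0)
  have hc₂ : Continuous (greenDeriv₂ L u f) := by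
    have := continuous_greenDeriv₂ (L := L) (u := fun _ : ℝ => u) (f := fun _ => f)
      (by fun_prop) (by fun_prop)
    exact this.comp (Continuous.prodMk_right 0)
  have hd (x : ℝ) (hx : x ∈ Ioo 0 L) : HasDerivAt u (greenDeriv₁ L u f x) x := by
    have hquad := (((hasDerivAt_id' x).const_sub L).fun_pow 2).div_const 2
    refine (((((hasDerivAt_integral_sub_pow_mul hf L 1 x).div_const 2).fun_sub
      (hasDerivAt_integral_sub_pow_mul hu L 0 x)).fun_sub
        (hquad.mul_const (greenConst L u f))).congr_deriv ?_).congr_of_eventuallyEq ?_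
    · simp only [greenDeriv₁, pow_zero, one_mul, pow_one]
      push_cast
      ring
    · filter_upwards [Ioo_mem_nhds hx.1 hx.2] with y hy
      have hy' := Ioo_subset_Icc_self hy
      simpa using eq_of_integral_greenKernel_mul hL hu hf hy' (h y hy')
  refine ⟨hu, hc₁, hc₂, by fun_prop, hd, fun x _ => ?_, fun x hx => ?_, hu0, huL, ?_⟩
  · have hmoment : HasDerivAt (fun x => ∫ y in x..L, (y - x) * f y) (-∫ y in x..L, f y) x := by
      simpa using hasDerivAt_integral_sub_pow_mul hf L 0 x
    refine (((hasDerivAt_integral_left hu L x).sub hmoment).add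
      (((hasDerivAt_id' x).const_sub L).mul_const (greenConst L u f))).congr_deriv ?_
    rw [greenDeriv₂]
    ring
  · exact (((hasDerivAt_integral_left hf L x).sub (hd x hx)).sub_const _).congr_deriv (by ring)
  · simp [greenDeriv₁]

end GreenRepresentation

namespace MildSolution

variable {L a b h t x : ℝ} {z : ℝ → ℝ → ℝ}

theorem integral_greenKernel_mul_timeDifferenceQuotient (hz : MildSolution L a b z) (hh : 0 < h)
    (ht : t ∈ Icc a (b - h)) (hx : x ∈ Icc 0 L) :
    ∫ y in (0 : ℝ)..L, greenKernel L x y * timeDifferenceQuotient h z t y =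
      timeAverage h z t x + ∫ y in (0 : ℝ)..L, greenKernelDeriv L x y * timeAverage h z t y := by
  have hc := hz.continuous
  have hmild := hz.integral_greenKernel_mul_sub t (t + h) ht.1 (by linarith)
    (by linarith [ht.2]) x hx
  rw [integral_add_of_continuous (by fun_prop) (by fun_prop),
    integral_integral_swap_of_continuous (by fun_prop)] at hmild
  simp only [intervalIntegral.integral_const_mul, ← mul_timeAverage, mul_left_comm _ h, ← mul_add]
    at hmild
  simp only [timeDifferenceQuotient, mul_left_comm _ h⁻¹, intervalIntegral.integral_const_mul]
  rw [hmild, inv_mul_cancel_left₀ hh.ne']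

theorem regularSolution_timeAverage (hz : MildSolution L a b z) (hL : 0 < L) (hh : 0 < h) :
    RegularSolution L a (b - h) (timeAverage h z)
      (fun t => greenDeriv₁ L (timeAverage h z t) (timeDifferenceQuotient h z t))
      (fun t => greenDeriv₂ L (timeAverage h z t) (timeDifferenceQuotient h z t))
      (fun t x => -(timeDifferenceQuotient h z t x +
        greenDeriv₁ L (timeAverage h z t) (timeDifferenceQuotient h z t) x))
      (timeDifferenceQuotient h z) := by
  have hc := hz.continuous
  have hmean := hz.timeAverage hh.le
  have hcv : Continuous (Function.uncurry (timeDifferenceQuotient h z)) := by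
    unfold timeDifferenceQuotient
    fun_prop
  have hc₁ := continuous_greenDeriv₁ (L := L) hmean.continuous hcv
  refine ⟨hmean.continuous, hc₁, continuous_greenDeriv₂ hmean.continuous hcv,
    (hcv.add hc₁).neg, hcv, fun t ht => ?_, hasDerivAt_timeAverage hh.ne' hc,
    fun t _ x _ => by ring⟩
  exact profile_of_integral_greenKernel_mul hL (hmean.continuous.uncurry_left t)
    (hcv.uncurry_left t) (hmean.left t ht) (hmean.right t ht) fun x hx =>
      hz.integral_greenKernel_mul_timeDifferenceQuotient hh ht hx

end MildSolution

/-! ### Estimates for mild solutions -/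

theorem le_of_continuousAt_of_forall_mem_Ioo {F G : ℝ → ℝ} {a b : ℝ} (hab : a < b)
    (hF : ContinuousAt F a) (hG : ContinuousAt G a) (h : ∀ x ∈ Ioo a b, F x ≤ G x) : F a ≤ G a := by
  refine le_of_tendsto_of_tendsto (b := nhdsWithin a (Ioi a))
    (hF.tendsto.mono_left nhdsWithin_le_nhds) (hG.tendsto.mono_left nhdsWithin_le_nhds) ?_
  filter_upwards [Ioo_mem_nhdsGT hab] with x hx using h x hx

/- For `w` with zero boundary values, `-∫ w * u₂ = ∫ w₁ * u₁`; the left-hand side is continuous in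
`w` for uniform convergence, so this transfers bounds on `∫ w₁ ^ 2` to the limit. -/
theorem Profile.neg_two_mul_integral_mul_deriv₂_le {L : ℝ} {u u₁ u₂ u₃ w w₁ : ℝ → ℝ} (hL : 0 ≤ L)
    (hu : Profile L u u₁ u₂ u₃) (hw : Continuous w) (hw₁ : Continuous w₁)
    (hd : ∀ x ∈ Ioo 0 L, HasDerivAt w (w₁ x) x) (hw0 : w 0 = 0) (hwL : w L = 0) :
    -(2 * ∫ x in (0 : ℝ)..L, w x * u₂ x) ≤
      (∫ x in (0 : ℝ)..L, w₁ x ^ 2) + ∫ x in (0 : ℝ)..L, u₁ x ^ 2 := by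
  obtain ⟨-, hc₁, hc₂, -, -, hd₁, -⟩ := hu
  have hparts := integral_mul_eq_sub_of_hasDerivAt_Ioo hL hc₁ hc₂ hw hw₁ hd₁ hd
  rw [hw0, hwL, zero_mul, zero_mul, sub_zero, zero_sub] at hparts
  have hyoung := integral_le_const_mul_add_const_mul (f := fun x => 2 * (w₁ x * u₁ x))
    (f₁ := fun x => w₁ x ^ 2) (f₂ := fun x => u₁ x ^ 2) hL (by fun_prop) (by fun_prop)
    (by fun_prop) 1 1 fun x _ => by linarith [two_mul_le_add_sq (w₁ x) (u₁ x)]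
  rw [intervalIntegral.integral_const_mul] at hyoung
  linarith

namespace RegularSolution

variable {L a b ℓ t : ℝ} {u u₁ u₂ u₃ v : ℝ → ℝ → ℝ} {w w₁ w₂ w₃ : ℝ → ℝ}

theorem integral_sub_mul_time_deriv_le (hL : 0 ≤ L) (hu : RegularSolution L a b u u₁ u₂ u₃ v)
    (hw : Profile L w w₁ w₂ w₃) (hℓ : 0 < ℓ) (ht : t ∈ Icc a b) :
    ∫ x in (0 : ℝ)..L, 2 * (u t x - w x) * v t x ≤
      ℓ⁻¹ * (∫ x in (0 : ℝ)..L, (u t x - w x) ^ 2) + ℓ * ∫ x in (0 : ℝ)..L, (w₁ x + w₃ x) ^ 2 := by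
  have hdiss := ((hu.profile t ht).sub hw).integral_affine_mul hL 1 0
  have heq := hu.eq_neg t ht
  obtain ⟨hc, hc₁, -, hc₃, -, -⟩ := hu
  obtain ⟨hcw, hcw₁, -, hcw₃, -⟩ := hw
  have hsplit : ∫ x in (0 : ℝ)..L, 2 * (u t x - w x) * v t x =
      -(∫ x in (0 : ℝ)..L, (1 + 0 * x) * (2 * (u t x - w x) *
        ((u₁ t x - w₁ x) + (u₃ t x - w₃ x))))
      - ∫ x in (0 : ℝ)..L, 2 * (u t x - w x) * (w₁ x + w₃ x) := by
    rw [← intervalIntegral.integral_neg, ← integral_sub_of_continuous (by fun_prop) (by fun_prop)]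
    refine intervalIntegral.integral_congr fun x hx => ?_
    rw [uIcc_of_le hL] at hx
    simp only [heq x hx]
    ring
  have hyoung : -∫ x in (0 : ℝ)..L, 2 * (u t x - w x) * (w₁ x + w₃ x) ≤
      ℓ⁻¹ * (∫ x in (0 : ℝ)..L, (u t x - w x) ^ 2) + ℓ * ∫ x in (0 : ℝ)..L, (w₁ x + w₃ x) ^ 2 := by
    rw [← intervalIntegral.integral_neg]
    exact integral_le_const_mul_add_const_mul (f₁ := fun x => (u t x - w x) ^ 2)
      (f₂ := fun x => (w₁ x + w₃ x) ^ 2) hL (by fun_prop) (by fun_prop) (by fun_prop) ℓ⁻¹ ℓ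
      fun x _ => by linarith [two_mul_mul_le (-(u t x - w x)) (w₁ x + w₃ x) hℓ]
  rw [hsplit, hdiss]
  linarith [sq_nonneg (u₁ t 0 - w₁ 0)]

theorem integral_sub_sq_add_le_exp_mul (hL : 0 ≤ L) (hu : RegularSolution L a b u u₁ u₂ u₃ v)
    (hw : Profile L w w₁ w₂ w₃) (hℓ : 0 < ℓ) (hab : a ≤ b) :
    (∫ x in (0 : ℝ)..L, (u b x - w x) ^ 2) + ℓ ^ 2 * ∫ x in (0 : ℝ)..L, (w₁ x + w₃ x) ^ 2 ≤
      exp ((b - a) / ℓ) * ((∫ x in (0 : ℝ)..L, (u a x - w x) ^ 2)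
        + ℓ ^ 2 * ∫ x in (0 : ℝ)..L, (w₁ x + w₃ x) ^ 2) := by
  have hbound := fun t ht => hu.integral_sub_mul_time_deriv_le hL hw hℓ (t := t) ht
  obtain ⟨hc, -, -, -, hcv, -, hdt, -⟩ := hu
  have hcw := hw.continuous
  set N := ∫ x in (0 : ℝ)..L, (w₁ x + w₃ x) ^ 2
  have hdE (t : ℝ) : HasDerivAt (fun t => ∫ x in (0 : ℝ)..L, (u t x - w x) ^ 2)
      (∫ x in (0 : ℝ)..L, 2 * (u t x - w x) * v t x) t :=
    hasDerivAt_integral_of_continuous (F := fun t x => (u t x - w x) ^ 2)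
      (G := fun t x => 2 * (u t x - w x) * v t x) (by fun_prop) (by fun_prop) fun t x => by
        simpa using ((hdt t x).sub_const (w x)).fun_pow 2
  have hdexp (t : ℝ) : HasDerivAt (fun t => exp ((b - t) / ℓ)) (exp ((b - t) / ℓ) * (-1 / ℓ)) t :=
    (((hasDerivAt_id' t).const_sub b).div_const ℓ).exp
  have hanti := antitoneOn_Icc_of_hasDerivAt_nonpos (a := a) (b := b)
    (fun t _ => (hdexp t).mul ((hdE t).add_const (ℓ ^ 2 * N))) (fun t ht => ?_)
    (left_mem_Icc.2 hab) (right_mem_Icc.2 hab) hab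
  · simpa using hanti
  · have h := mul_le_mul_of_nonneg_left (hbound t (Ioo_subset_Icc_self ht)) hℓ.le
    rw [mul_add, mul_inv_cancel_left₀ hℓ.ne'] at h
    field_simp
    rw [mul_zero]
    exact mul_nonpos_of_nonneg_of_nonpos (exp_pos _).le (by linarith)

end RegularSolution

namespace MildSolution

variable {L a b : ℝ} {z : ℝ → ℝ → ℝ} {w₁ w₂ w₃ : ℝ → ℝ}

theorem antitoneOn_integral_sq (hz : MildSolution L a b z) (hL : 0 < L) :
    AntitoneOn (fun t => ∫ x in (0 : ℝ)..L, z t x ^ 2) (Icc a b) := by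
  intro s hs t ht hst
  have hc := hz.continuous
  rcases hst.eq_or_lt with rfl | hst
  · rfl
  have key := le_of_continuousAt_of_forall_mem_Ioo (sub_pos.2 hst)
    (F := fun h => ∫ x in (0 : ℝ)..L, timeAverage h z (t - h) x ^ 2)
    (G := fun h => ∫ x in (0 : ℝ)..L, timeAverage h z s x ^ 2)
    (Continuous.continuousAt (by unfold timeAverage; fun_prop))
    (Continuous.continuousAt (by unfold timeAverage; fun_prop)) fun h hh =>
      (hz.regularSolution_timeAverage hL hh.1).antitoneOn_integral_sq hL.le
        ⟨hs.1, by linarith [ht.2, hh.2]⟩ ⟨by linarith [hs.1, hh.2], by linarith [ht.2]⟩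
        (by linarith [hh.2])
  simpa only [timeAverage_zero, sub_zero] using key

theorem integral_sub_sq_le (hz : MildSolution L a b z) (hL : 0 < L) (hab : a < b)
    (hw : Profile L (z a) w₁ w₂ w₃) :
    ∫ x in (0 : ℝ)..L, (z b x - z a x) ^ 2 ≤
      2 * (b - a) ^ 2 * ∫ x in (0 : ℝ)..L, (w₁ x + w₃ x) ^ 2 := by
  have hc := hz.continuous
  have hba := sub_pos.2 hab
  set N := ∫ x in (0 : ℝ)..L, (w₁ x + w₃ x) ^ 2
  have hN : 0 ≤ N := integral_sq_nonneg hL.le _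
  have key := le_of_continuousAt_of_forall_mem_Ioo hba
    (F := fun h => (∫ x in (0 : ℝ)..L, (timeAverage h z (b - h) x - z a x) ^ 2) + (b - a) ^ 2 * N)
    (G := fun h => exp ((b - h - a) / (b - a)) *
      ((∫ x in (0 : ℝ)..L, (timeAverage h z a x - z a x) ^ 2) + (b - a) ^ 2 * N))
    (Continuous.continuousAt (by unfold timeAverage; fun_prop))
    (Continuous.continuousAt (by unfold timeAverage; fun_prop)) fun h hh =>
      (hz.regularSolution_timeAverage hL hh.1).integral_sub_sq_add_le_exp_mul hL.le hw hba
        (by linarith [hh.2])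
  simp only [timeAverage_zero, sub_zero, sub_self, div_self hba.ne'] at key
  norm_num at key
  linarith [mul_le_mul_of_nonneg_right exp_one_lt_three.le (mul_nonneg (sq_nonneg (b - a)) hN)]

theorem integral_abs_sub_le (hz : MildSolution L a b z) (hL : 0 < L) (hab : a < b)
    (hw : Profile L (z a) w₁ w₂ w₃) :
    ∫ x in (0 : ℝ)..L, |z b x - z a x| ≤
      ((∫ x in (0 : ℝ)..L, (w₁ x + w₃ x) ^ 2) + L / 2) * (b - a) := by
  have hc := hz.continuous
  have hba := sub_pos.2 hab
  have hsq := hz.integral_sub_sq_le hL hab hw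
  have hyoung := integral_le_const_mul_add_const_mul (f := fun x => |z b x - z a x|)
    (f₁ := fun x => (z b x - z a x) ^ 2) (f₂ := fun _ => 1) hL.le (by fun_prop) (by fun_prop)
    continuous_const (2 * (b - a))⁻¹ ((b - a) / 2) fun x _ => by
      have h := two_mul_mul_le |z b x - z a x| 1 hba
      rw [sq_abs] at h
      rw [mul_inv]
      linarith
  have hmul := mul_le_mul_of_nonneg_left hsq (show 0 ≤ (2 * (b - a))⁻¹ by positivity)
  rw [show ∀ N : ℝ, (2 * (b - a))⁻¹ * (2 * (b - a) ^ 2 * N) = N * (b - a) by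
    intro N; field_simp] at hmul
  rw [intervalIntegral.integral_const, smul_eq_mul, sub_zero, mul_one] at hyoung
  linarith

theorem exists_integral_deriv_sq_le_div (hL : 0 < L) {T : ℝ} (hT : 0 < T) :
    ∃ C > 0, ∀ z, MildSolution L 0 T z → ∀ t ∈ Ioc 0 T, ∀ u₁ u₂ u₃, Profile L (z t) u₁ u₂ u₃ →
      ∫ x in (0 : ℝ)..L, u₁ x ^ 2 ≤ C / t * ∫ x in (0 : ℝ)..L, z 0 x ^ 2 := by
  obtain ⟨C, hC, hreg⟩ := RegularSolution.exists_integral_deriv_sq_le_div hL hT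
  refine ⟨C, hC, fun z hz t ht u₁ u₂ u₃ hu => ?_⟩
  have hc := hz.continuous
  have hc₂ := hu.continuous₂
  have hcC : ContinuousAt (fun h => C / (t - h - h)) 0 :=
    continuousAt_const.div (by fun_prop) (by simpa using ht.1.ne')
  have hcI : Continuous fun h => ∫ x in (0 : ℝ)..L, timeAverage h (timeAverage h z) 0 x ^ 2 := by
    unfold timeAverage
    fun_prop
  have key := le_of_continuousAt_of_forall_mem_Ioo (half_pos ht.1)
    (F := fun h => -(2 * ∫ x in (0 : ℝ)..L, timeAverage h (timeAverage h z) (t - h - h) x * u₂ x))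
    (G := fun h => C / (t - h - h) * (∫ x in (0 : ℝ)..L, timeAverage h (timeAverage h z) 0 x ^ 2)
      + ∫ x in (0 : ℝ)..L, u₁ x ^ 2)
    (Continuous.continuousAt (by unfold timeAverage; fun_prop))
    ((hcC.mul hcI.continuousAt).add continuousAt_const) fun h hh => ?_
  · have hparts := hu.integral_deriv_sq_eq hL.le
    simp only [timeAverage_zero, sub_zero] at key
    linarith
  · have ht0 : 0 < t - h - h := by linarith [hh.2]
    have htT : t - h - h ≤ T - h - h := by linarith [ht.2]
    have hmean := hz.regularSolution_timeAverage hL hh.1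
    have hmean₂ := (hz.timeAverage hh.1.le).regularSolution_timeAverage hL hh.1
    have hsmooth := hreg _ _ _ _ _ _ _ _ _ _ (by linarith [hh.1]) hmean₂
      (hmean.timeDifferenceQuotient hh.1.le) _ ⟨ht0, htT⟩
    have hp := hmean₂.profile _ ⟨ht0.le, htT⟩
    have hlsc := hu.neg_two_mul_integral_mul_deriv₂_le hL.le hp.continuous hp.continuous₁
      hp.hasDerivAt hp.left hp.right
    linarith

end MildSolution

/-! ### Gaps of a closed set -/

/-- The gaps of a set of real numbers: the pairs of endpoints, both in the set, of the bounded open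
intervals that are contiguous to it. -/
def gaps (K : Set ℝ) : Set (ℝ × ℝ) :=
  {i | i.1 ∈ K ∧ i.2 ∈ K ∧ i.1 < i.2 ∧ Ioo i.1 i.2 ⊆ Kᶜ}

section Gaps

variable {K : Set ℝ} {s t u : ℝ} {i : ℝ × ℝ}

theorem isGreatest_fst_of_mem_gaps (hi : i ∈ gaps K) (hu : u ∈ Ioo i.1 i.2) :
    IsGreatest (K ∩ Iic u) i.1 :=
  ⟨⟨hi.1, hu.1.le⟩, fun _ hv => not_lt.1 fun h => hi.2.2.2 ⟨h, hv.2.trans_lt hu.2⟩ hv.1⟩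

theorem isLeast_snd_of_mem_gaps (hi : i ∈ gaps K) (hu : u ∈ Ioo i.1 i.2) :
    IsLeast (K ∩ Ici u) i.2 :=
  ⟨⟨hi.2.1, hu.2.le⟩, fun _ hv => not_lt.1 fun h => hi.2.2.2 ⟨hu.1.trans_le hv.2, h⟩ hv.1⟩

theorem pairwiseDisjoint_gaps (K : Set ℝ) :
    (gaps K).PairwiseDisjoint fun i => Ioo i.1 i.2 := fun _ hi _ hj hij =>
  Set.disjoint_left.2 fun _ hui huj => hij <| Prod.ext
    ((isGreatest_fst_of_mem_gaps hi hui).unique (isGreatest_fst_of_mem_gaps hj huj))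
    ((isLeast_snd_of_mem_gaps hi hui).unique (isLeast_snd_of_mem_gaps hj huj))

theorem countable_gaps (K : Set ℝ) : (gaps K).Countable :=
  (pairwiseDisjoint_gaps K).countable_of_isOpen (fun _ _ => isOpen_Ioo)
    fun _ hi => nonempty_Ioo.2 hi.2.2.1

theorem iUnion_gaps (hK : IsClosed K) (hs : s ∈ K) (ht : t ∈ K) (hKst : K ⊆ Icc s t) :
    ⋃ i : gaps K, Ioo i.1.1 i.1.2 = Icc s t \ K := by
  ext u
  rw [mem_iUnion]
  constructor
  · rintro ⟨⟨i, hi⟩, hu⟩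
    exact ⟨⟨(hKst hi.1).1.trans hu.1.le, hu.2.le.trans (hKst hi.2.1).2⟩, hi.2.2.2 hu⟩
  · rintro ⟨hu, huK⟩
    have hl := (hK.inter isClosed_Iic).isGreatest_csSup ⟨s, hs, hu.1⟩ ⟨u, fun _ hv => hv.2⟩
    have hr := (hK.inter isClosed_Ici).isLeast_csInf ⟨t, ht, hu.2⟩ ⟨u, fun _ hv => hv.2⟩
    have hlu := lt_of_le_of_ne hl.1.2 (ne_of_mem_of_not_mem hl.1.1 huK)
    have hur := lt_of_le_of_ne' hr.1.2 (ne_of_mem_of_not_mem hr.1.1 huK)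
    refine ⟨⟨(_, _), hl.1.1, hr.1.1, hlu.trans hur, fun v hv hvK => ?_⟩, hlu, hur⟩
    rcases le_total v u with h | h
    · exact hv.1.not_ge (hl.2 ⟨hvK, h⟩)
    · exact hv.2.not_ge (hr.2 ⟨hvK, h⟩)

theorem hasSum_gaps_integral {f : ℝ → ℝ} (hK : IsClosed K) (hs : s ∈ K) (ht : t ∈ K)
    (hKst : K ⊆ Icc s t) (hf : IntegrableOn f (Icc s t)) :
    HasSum (fun i : gaps K => ∫ τ in i.1.1..i.1.2, f τ)
      ((∫ τ in s..t, f τ) - ∫ τ in K, f τ) := by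
  have := (countable_gaps K).to_subtype
  have hU := iUnion_gaps hK hs ht hKst
  have hsum := hasSum_integral_iUnion (μ := volume) (fun i : gaps K => measurableSet_Ioo)
    (fun i j hij => pairwiseDisjoint_gaps K i.2 j.2 (Subtype.coe_injective.ne hij))
    (hU ▸ hf.mono_set sdiff_subset)
  rw [hU, setIntegral_sdiff hK.measurableSet hf hKst] at hsum
  rw [intervalIntegral.integral_of_le (hKst hs).2, ← integral_Icc_eq_integral_Ioc]
  refine hsum.congr_fun fun i => ?_
  rw [intervalIntegral.integral_of_le i.2.2.2.1.le, integral_Ioc_eq_integral_Ioo]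

theorem hasSum_gaps_sub {F f : ℝ → ℝ} (hK : IsClosed K) (hs : s ∈ K) (ht : t ∈ K)
    (hKst : K ⊆ Icc s t) (hF : ∀ τ ∈ Icc s t, HasDerivAt F (f τ) τ)
    (hf : ContinuousOn f (Icc s t)) :
    HasSum (fun i : gaps K => F i.1.2 - F i.1.1) (F t - F s - ∫ τ in K, f τ) := by
  have hftc : ∀ a b, a ≤ b → Icc a b ⊆ Icc s t → ∫ τ in a..b, f τ = F b - F a := by
    intro a b hab hsub
    rw [← uIcc_of_le hab] at hsub
    exact intervalIntegral.integral_eq_sub_of_hasDerivAt (fun τ hτ => hF τ (hsub hτ))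
      (hf.mono hsub).intervalIntegrable
  have hsum := hasSum_gaps_integral hK hs ht hKst hf.integrableOn_Icc
  rw [hftc s t (hKst hs).2 subset_rfl] at hsum
  refine hsum.congr_fun fun i => ?_
  exact (hftc _ _ i.2.2.2.1.le (Icc_subset_Icc (hKst i.2.1).1 (hKst i.2.2.1).2)).symm

theorem hasSum_gaps_integral_sub {Y : Type*} [MeasurableSpace Y] {μ : Measure Y} [SFinite μ]
    {F f : ℝ → Y → ℝ} (hK : IsClosed K) (hs : s ∈ K) (ht : t ∈ K) (hKst : K ⊆ Icc s t)
    (hFf : ∀ᵐ y ∂μ, (∀ τ ∈ Icc s t, HasDerivAt (fun τ => F τ y) (f τ y) τ) ∧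
      ContinuousOn (fun τ => f τ y) (Icc s t))
    (hF : ∀ τ ∈ K, Integrable (F τ) μ)
    (hf : Integrable (fun p : Y × ℝ => f p.2 p.1) (μ.prod (volume.restrict K)))
    (hsum : Summable fun i : gaps K => ∫ y, |F i.1.2 y - F i.1.1 y| ∂μ) :
    HasSum (fun i : gaps K => ∫ y, (F i.1.2 y - F i.1.1 y) ∂μ)
      ((∫ y, (F t y - F s y) ∂μ) - ∫ τ in K, ∫ y, f τ y ∂μ) := by
  have := (countable_gaps K).to_subtype
  have hint := hasSum_integral_of_summable_integral_norm (F := fun (i : gaps K) y =>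
    F i.1.2 y - F i.1.1 y) (fun i => (hF _ i.2.2.1).sub (hF _ i.2.1)) hsum
  have htsum : ∀ᵐ y ∂μ, ∑' i : gaps K, (F i.1.2 y - F i.1.1 y) =
      F t y - F s y - ∫ τ in K, f τ y :=
    hFf.mono fun y hy => (hasSum_gaps_sub hK hs ht hKst hy.1 hy.2).tsum_eq
  have hsub := integral_sub (f := fun y => F t y - F s y) (g := fun y => ∫ τ in K, f τ y)
    ((hF t ht).sub (hF s hs)) hf.integral_prod_left
  rw [integral_integral_swap (f := fun y τ => f τ y) hf] at hsub
  rwa [integral_congr_ae htsum, hsub] at hint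

end Gaps

theorem exists_isOpen_inter_nonempty_forall_abs_le {X ι : Type*} [TopologicalSpace X] {S : Set X}
    [BaireSpace S] (hS : S.Nonempty) {f : ι → X → ℝ} (hf : ∀ i, ContinuousOn (f i) S)
    (hbdd : ∀ x ∈ S, ∃ n : ℕ, ∀ i, |f i x| ≤ n) :
    ∃ V, IsOpen V ∧ (V ∩ S).Nonempty ∧ ∃ n : ℕ, ∀ x ∈ V ∩ S, ∀ i, |f i x| ≤ n := by
  have := hS.to_subtype
  obtain ⟨n, x, hx⟩ := nonempty_interior_of_iUnion_of_closed
    (f := fun n : ℕ => {x : S | ∀ i, |f i x| ≤ n})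
    (fun n => by
      simp only [ofPred_forall]
      exact isClosed_iInter fun i => isClosed_le (hf i).domRestrict.abs continuous_const)
    (eq_univ_of_forall fun x => mem_iUnion.2 (hbdd x x.2))
  obtain ⟨W, hW, hWo, hxW⟩ := mem_interior.1 hx
  obtain ⟨V, hV, rfl⟩ := isOpen_induced_iff.1 hWo
  exact ⟨V, hV, ⟨x, hxW, x.2⟩, n, fun y hy => hW (show (⟨y, hy.2⟩ : S) ∈ _ from hy.1)⟩

/-! ### Classical solutions are mild solutions -/

/-- The failure of `z` to be a mild solution with initial time `0`, tested against
`greenKernel L x`: a mild solution is a function `z` for which it does not depend on `t`. -/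
noncomputable def mildDefect (L : ℝ) (z : ℝ → ℝ → ℝ) (x t : ℝ) : ℝ :=
  (∫ y in (0 : ℝ)..L, greenKernel L x y * z t y) -
    ∫ τ in (0 : ℝ)..t, (z τ x + ∫ y in (0 : ℝ)..L, greenKernelDeriv L x y * z τ y)

/-- The set of times near which the defect of `z` is locally constant, uniformly in `x`. -/
def mildSet (L : ℝ) (z : ℝ → ℝ → ℝ) : Set ℝ :=
  {t | ∀ᶠ s in nhds t, ∀ x ∈ Icc 0 L, mildDefect L z x s = mildDefect L z x t}

section MildDefect

variable {L s t x : ℝ} {z : ℝ → ℝ → ℝ}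

theorem continuous_mildDefect (hz : Continuous (Function.uncurry z)) (L x : ℝ) :
    Continuous (mildDefect L z x) := by
  have hforce : Continuous fun τ => z τ x + ∫ y in (0 : ℝ)..L, greenKernelDeriv L x y * z τ y := by
    fun_prop
  exact Continuous.sub (by fun_prop)
    (intervalIntegral.continuous_primitive hforce.intervalIntegrable 0)

theorem mildDefect_sub_mildDefect (hz : Continuous (Function.uncurry z)) (L x s t : ℝ) :
    mildDefect L z x t - mildDefect L z x s =
      (∫ y in (0 : ℝ)..L, greenKernel L x y * (z t y - z s y)) -
        ∫ τ in s..t, (z τ x + ∫ y in (0 : ℝ)..L, greenKernelDeriv L x y * z τ y) := by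
  have hforce : Continuous fun τ => z τ x + ∫ y in (0 : ℝ)..L, greenKernelDeriv L x y * z τ y := by
    fun_prop
  rw [← intervalIntegral.integral_interval_sub_left (hforce.intervalIntegrable 0 t)
    (hforce.intervalIntegrable 0 s)]
  simp only [mul_sub]
  rw [integral_sub_of_continuous (by fun_prop) (by fun_prop), mildDefect, mildDefect]
  ring

theorem isOpen_mildSet (L : ℝ) (z : ℝ → ℝ → ℝ) : IsOpen (mildSet L z) :=
  isOpen_iff_mem_nhds.2 fun _ ht => (eventually_eventually_nhds.2 ht).mono fun _ hs =>
    hs.mono fun _ hr x hx => (hr x hx).trans (hs.self_of_nhds x hx).symm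

theorem mildDefect_eq_of_Ioo_subset (hz : Continuous (Function.uncurry z)) (hst : s ≤ t)
    (hU : Ioo s t ⊆ mildSet L z) (hx : x ∈ Icc 0 L) : mildDefect L z x t = mildDefect L z x s := by
  have h := integral_eq_sub_of_hasDerivAt_Ioo hst (continuous_mildDefect hz L x)
    (continuous_const (y := 0)) fun u hu =>
      (hasDerivAt_const u (mildDefect L z x u)).congr_of_eventuallyEq
        ((hU hu).mono fun v hv => hv x hx)
  rw [intervalIntegral.integral_zero] at h
  linarith

end MildDefect

/-- A solution of the linearized KdV system in the classical, pointwise sense: `z₁`, `z₂` and `z₃`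
are its derivatives in `x`, and `v` its derivative in `t`. The latter is only assumed to be
continuous in `t` for each `x`, so it need not be integrable. -/
structure ClassicalSolution (L T : ℝ) (z z₁ z₂ z₃ v : ℝ → ℝ → ℝ) : Prop where
  continuous : Continuous (Function.uncurry z)
  profile : ∀ t ∈ Icc 0 T, Profile L (z t) (z₁ t) (z₂ t) (z₃ t)
  hasDerivAt_time : ∀ x ∈ Ioo 0 L, ∀ t ∈ Ioo 0 T, HasDerivAt (fun s => z s x) (v t x) t
  continuousOn_time_deriv : ∀ x ∈ Ioo 0 L, ContinuousOn (fun t => v t x) (Ioo 0 T)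
  measurable_time_deriv : Measurable (Function.uncurry v)
  eq_neg : ∀ t ∈ Ioo 0 T, ∀ x ∈ Ioo 0 L, v t x = -(z₁ t x + z₃ t x)

namespace ClassicalSolution

variable {L T a b n s t x : ℝ} {z z₁ z₂ z₃ v : ℝ → ℝ → ℝ} {K : Set ℝ}

theorem integral_greenKernel_mul_time_deriv (hz : ClassicalSolution L T z z₁ z₂ z₃ v) (hL : 0 < L)
    (ht : t ∈ Ioo 0 T) (hx : x ∈ Icc 0 L) :
    ∫ y in (0 : ℝ)..L, greenKernel L x y * v t y =
      z t x + ∫ y in (0 : ℝ)..L, greenKernelDeriv L x y * z t y := by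
  calc _ = ∫ y in (0 : ℝ)..L, -(greenKernel L x y * (z₁ t y + z₃ t y)) :=
        intervalIntegral.integral_congr_Ioo_of_le hL.le fun y hy => by
          simp only [hz.eq_neg t ht y hy, mul_neg]
    _ = _ := by
      rw [intervalIntegral.integral_neg,
        (hz.profile t (Ioo_subset_Icc_self ht)).integral_greenKernel_mul hL hx]
      ring

theorem exists_abs_time_deriv_le (hz : ClassicalSolution L T z z₁ z₂ z₃ v) (ht : t ∈ Ioo 0 T) :
    ∃ n : ℕ, ∀ y ∈ Ioo 0 L, |v t y| ≤ n := by
  have hp := hz.profile t (Ioo_subset_Icc_self ht)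
  obtain ⟨M, hM⟩ := isCompact_Icc.exists_bound_of_continuousOn (s := Icc 0 L)
    (hp.continuous₁.add hp.continuous₃).continuousOn
  obtain ⟨n, hn⟩ := exists_nat_ge M
  refine ⟨n, fun y hy => ?_⟩
  rw [hz.eq_neg t ht y hy, abs_neg]
  exact (hM y (Ioo_subset_Icc_self hy)).trans hn

theorem integral_abs_sub_le (hz : ClassicalSolution L T z z₁ z₂ z₃ v) (hL : 0 < L)
    (ha : a ∈ Ioo 0 T) (hab : a < b) (hmild : MildSolution L a b z)
    (hn : ∀ y ∈ Ioo 0 L, |v a y| ≤ n) :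
    ∫ y in (0 : ℝ)..L, |z b y - z a y| ≤ (n ^ 2 * L + L / 2) * (b - a) := by
  have hp := hz.profile a (Ioo_subset_Icc_self ha)
  have hc₁ := hp.continuous₁
  have hc₃ := hp.continuous₃
  have hsq : ∫ y in (0 : ℝ)..L, (z₁ a y + z₃ a y) ^ 2 ≤ n ^ 2 * L :=
    calc _ ≤ ∫ _ in (0 : ℝ)..L, n ^ 2 :=
          intervalIntegral.integral_mono_on_of_le_Ioo hL.le
            (Continuous.intervalIntegrable (by fun_prop) _ _) intervalIntegrable_const
            fun y hy => by
              rw [← neg_sq, ← hz.eq_neg a ha y hy]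
              exact sq_le_sq.2 ((hn y hy).trans (le_abs_self n))
      _ = n ^ 2 * L := by simp [mul_comm]
  refine (hmild.integral_abs_sub_le hL hab hp).trans ?_
  gcongr

theorem integrable_greenKernel_mul_time_deriv (hz : ClassicalSolution L T z z₁ z₂ z₃ v)
    (hK : IsCompact K) (hn : ∀ τ ∈ K, ∀ y ∈ Ioo 0 L, |v τ y| ≤ n) (x : ℝ) :
    Integrable (fun p : ℝ × ℝ => greenKernel L x p.1 * v p.2 p.1)
      ((volume.restrict (Ioo 0 L)).prod (volume.restrict K)) := by
  obtain ⟨M, hM⟩ := isCompact_Icc.exists_bound_of_continuousOn (s := Icc 0 L)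
    (continuous_greenKernel L x).continuousOn
  rw [Measure.prod_restrict]
  refine Measure.integrableOn_of_bounded (M := M * n) ?_ ?_ ?_
  · rw [Measure.prod_prod]
    exact ENNReal.mul_ne_top measure_Ioo_lt_top.ne hK.measure_ne_top
  · exact (((continuous_greenKernel L x).measurable.comp measurable_fst).mul
      (hz.measurable_time_deriv.comp measurable_swap)).aestronglyMeasurable
  · refine (ae_restrict_mem (measurableSet_Ioo.prod hK.measurableSet)).mono fun p hp => ?_
    rw [norm_mul]
    have hMp := hM p.1 (Ioo_subset_Icc_self hp.1)
    exact mul_le_mul hMp (hn p.2 hp.2 p.1 hp.1) (norm_nonneg _) ((norm_nonneg _).trans hMp)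

theorem summable_gaps_integral_abs (hz : ClassicalSolution L T z z₁ z₂ z₃ v) (hL : 0 < L)
    (hs0 : 0 < s) (htT : t < T) (hK : IsClosed K) (hs : s ∈ K) (ht : t ∈ K) (hKst : K ⊆ Icc s t)
    (hn : ∀ τ ∈ K, ∀ y ∈ Ioo 0 L, |v τ y| ≤ n)
    (hmild : ∀ i ∈ gaps K, MildSolution L i.1 i.2 z) (x : ℝ) :
    Summable fun i : gaps K => ∫ y in Ioo 0 L,
      |greenKernel L x y * z i.1.2 y - greenKernel L x y * z i.1.1 y| := by
  have hc := hz.continuous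
  obtain ⟨M, hM⟩ := isCompact_Icc.exists_bound_of_continuousOn (s := Icc 0 L)
    (continuous_greenKernel L x).continuousOn
  have hM0 : 0 ≤ M := (norm_nonneg _).trans (hM 0 (left_mem_Icc.2 hL.le))
  have hlength := (hasSum_gaps_sub hK hs ht hKst (fun τ _ => hasDerivAt_id' τ)
    continuousOn_const).summable
  refine Summable.of_nonneg_of_le (fun i => integral_nonneg fun y => abs_nonneg _) (fun i => ?_)
    (hlength.mul_left (M * (n ^ 2 * L + L / 2)))
  have hi := hKst i.2.1
  calc ∫ y in Ioo 0 L, |greenKernel L x y * z i.1.2 y - greenKernel L x y * z i.1.1 y|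
      = ∫ y in (0 : ℝ)..L, |greenKernel L x y * (z i.1.2 y - z i.1.1 y)| := by
        simp only [mul_sub]
        rw [intervalIntegral.integral_of_le hL.le, integral_Ioc_eq_integral_Ioo]
    _ ≤ ∫ y in (0 : ℝ)..L, M * |z i.1.2 y - z i.1.1 y| := by
        refine integral_mono_of_continuous hL.le (by fun_prop) (by fun_prop) fun y hy => ?_
        rw [abs_mul]
        gcongr
        exact hM y hy
    _ ≤ M * ((n ^ 2 * L + L / 2) * (i.1.2 - i.1.1)) := by
        rw [intervalIntegral.integral_const_mul]
        gcongr
        exact hz.integral_abs_sub_le hL ⟨hs0.trans_le hi.1, hi.2.trans_lt htT⟩ i.2.2.2.1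
          (hmild _ i.2) (hn _ i.2.1)
    _ = _ := by ring

theorem mildDefect_eq_of_gaps (hz : ClassicalSolution L T z z₁ z₂ z₃ v) (hL : 0 < L)
    (hs0 : 0 < s) (htT : t < T) (hK : IsClosed K) (hs : s ∈ K) (ht : t ∈ K) (hKst : K ⊆ Icc s t)
    (hn : ∀ τ ∈ K, ∀ y ∈ Ioo 0 L, |v τ y| ≤ n)
    (hmild : ∀ i ∈ gaps K, MildSolution L i.1 i.2 z) (hx : x ∈ Icc 0 L) :
    mildDefect L z x t = mildDefect L z x s := by
  have hc := hz.continuous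
  have hIoo : Icc s t ⊆ Ioo 0 T := Icc_subset_Ioo hs0 htT
  have hspace := hasSum_gaps_integral_sub (μ := volume.restrict (Ioo 0 L))
    (F := fun τ y => greenKernel L x y * z τ y) (f := fun τ y => greenKernel L x y * v τ y)
    hK hs ht hKst
    ((ae_restrict_mem measurableSet_Ioo).mono fun y hy =>
      ⟨fun τ hτ => (hz.hasDerivAt_time y hy τ (hIoo hτ)).const_mul _,
        continuousOn_const.mul ((hz.continuousOn_time_deriv y hy).mono hIoo)⟩)
    (fun τ _ => (Continuous.integrableOn_Icc (by fun_prop)).mono_set Ioo_subset_Icc_self)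
    (hz.integrable_greenKernel_mul_time_deriv (isCompact_Icc.of_isClosed_subset hK hKst) hn x)
    (hz.summable_gaps_integral_abs hL hs0 htT hK hs ht hKst hn hmild x)
  have hforce : Continuous fun τ => z τ x + ∫ y in (0 : ℝ)..L, greenKernelDeriv L x y * z τ y := by
    fun_prop
  have htime := hasSum_gaps_integral hK hs ht hKst hforce.continuousOn.integrableOn_Icc
  simp only [← mul_sub, ← integral_Ioc_eq_integral_Ioo, ← intervalIntegral.integral_of_le hL.le]
    at hspace
  rw [setIntegral_congr_fun hK.measurableSet fun τ hτ =>
    hz.integral_greenKernel_mul_time_deriv hL (hIoo (hKst hτ)) hx] at hspace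
  have heq := (hspace.congr_fun fun i => ((hmild _ i.2).integral_greenKernel_mul_sub _ _ le_rfl
    i.2.2.2.1.le le_rfl x hx).symm).unique htime
  linarith [mildDefect_sub_mildDefect hc L x s t]

theorem mildSolution_of_Ioo_subset (hz : ClassicalSolution L T z z₁ z₂ z₃ v) (ha : 0 ≤ a)
    (hb : b ≤ T) (hU : Ioo a b ⊆ mildSet L z) : MildSolution L a b z where
  continuous := hz.continuous
  left t ht := (hz.profile t (Icc_subset_Icc ha hb ht)).left
  right t ht := (hz.profile t (Icc_subset_Icc ha hb ht)).right
  integral_greenKernel_mul_sub s t hs hst ht x hx := by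
    have h := mildDefect_sub_mildDefect hz.continuous L x s t
    rw [mildDefect_eq_of_Ioo_subset hz.continuous hst ((Ioo_subset_Ioo hs ht).trans hU) hx] at h
    linarith

theorem mildDefect_eq_of_bounded (hz : ClassicalSolution L T z z₁ z₂ z₃ v) (hL : 0 < L)
    (hs : 0 < s) (hst : s ≤ t) (ht : t < T)
    (hn : ∀ τ ∈ Icc s t \ mildSet L z, ∀ y ∈ Ioo 0 L, |v τ y| ≤ n) (hx : x ∈ Icc 0 L) :
    mildDefect L z x t = mildDefect L z x s := by
  obtain ⟨ns, hns⟩ := hz.exists_abs_time_deriv_le ⟨hs, hst.trans_lt ht⟩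
  obtain ⟨nt, hnt⟩ := hz.exists_abs_time_deriv_le ⟨hs.trans_le hst, ht⟩
  set K := insert s (insert t (Icc s t \ mildSet L z))
  have hK : IsClosed K := isClosed_singleton.union <| isClosed_singleton.union <|
    isClosed_Icc.sdiff (isOpen_mildSet L z)
  have hKst : K ⊆ Icc s t := insert_subset (left_mem_Icc.2 hst)
    (insert_subset (right_mem_Icc.2 hst) sdiff_subset)
  refine hz.mildDefect_eq_of_gaps hL hs ht hK (mem_insert _ _)
    (mem_insert_of_mem _ (mem_insert _ _)) hKst (n := max n (max ns nt)) ?_ (fun i hi => ?_) hx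
  · rintro τ (rfl | rfl | hτ) y hy
    · exact (hns y hy).trans (by simp)
    · exact (hnt y hy).trans (by simp)
    · exact (hn τ hτ y hy).trans (by simp)
  · refine hz.mildSolution_of_Ioo_subset (hs.le.trans (hKst hi.1).1) ((hKst hi.2.1).2.trans ht.le)
      fun u hu => ?_
    by_contra huU
    exact hi.2.2.2 hu (.inr (.inr ⟨⟨(hKst hi.1).1.trans hu.1.le,
      hu.2.le.trans (hKst hi.2.1).2⟩, huU⟩))

theorem Ioo_subset_mildSet (hz : ClassicalSolution L T z z₁ z₂ z₃ v) (hL : 0 < L) :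
    Ioo 0 T ⊆ mildSet L z := by
  by_contra hne
  set S := Ioo 0 T ∩ (mildSet L z)ᶜ
  have hS : S.Nonempty := by rwa [← sdiff_nonempty] at hne
  have := (isOpen_Ioo.isLocallyClosed.inter
    (isOpen_mildSet L z).isClosed_compl.isLocallyClosed : IsLocallyClosed S).locallyCompactSpace
  obtain ⟨V, hV, ⟨t, htV, htS, htU⟩, n, hn⟩ := exists_isOpen_inter_nonempty_forall_abs_le hS
    (f := fun (y : Ioo 0 L) t => v t y)
    (fun y => (hz.continuousOn_time_deriv y y.2).mono inter_subset_left)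
    fun t ht => (hz.exists_abs_time_deriv_le ht.1).imp fun n hn y => hn y y.2
  obtain ⟨δ, hδ, hball⟩ := Metric.isOpen_iff.1 (hV.inter isOpen_Ioo) t ⟨htV, htS⟩
  have hloc : ∀ r ∈ Metric.ball t δ, ∀ s ∈ Metric.ball t δ, r ≤ s → ∀ x ∈ Icc 0 L,
      mildDefect L z x s = mildDefect L z x r := by
    intro r hr s hs hrs x hx
    have hsub : Icc r s ⊆ V ∩ Ioo 0 T :=
      ((convex_ball t δ).ordConnected.out hr hs).trans hball
    exact hz.mildDefect_eq_of_bounded hL (hball hr).2.1 hrs (hball hs).2.2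
      (fun τ hτ y hy => hn τ ⟨(hsub hτ.1).1, (hsub hτ.1).2, hτ.2⟩ ⟨y, hy⟩) hx
  refine htU (Filter.mem_of_superset (Metric.ball_mem_nhds t hδ) fun s hs x hx => ?_)
  have ht := Metric.mem_ball_self (x := t) hδ
  rcases le_total s t with hst | hst
  · exact (hloc s hs t ht hst x hx).symm
  · exact hloc t ht s hs hst x hx

theorem mildSolution (hz : ClassicalSolution L T z z₁ z₂ z₃ v) (hL : 0 < L) :
    MildSolution L 0 T z :=
  hz.mildSolution_of_Ioo_subset le_rfl le_rfl (hz.Ioo_subset_mildSet hL)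

end ClassicalSolution

/-! ### Extension by constants outside the rectangle -/

section ProjIcc

variable {E : Type*} {a b x : ℝ} {f : ℝ → ℝ} {n k : ℕ}

theorem coe_projIcc_of_mem (h : a ≤ b) (hx : x ∈ Icc a b) : (projIcc a b h x : ℝ) = x := by
  rw [projIcc_of_mem h hx]

theorem comp_projIcc_eventuallyEq (h : a ≤ b) (hx : x ∈ Ioo a b) (g : ℝ → E) :
    (fun y => g (projIcc a b h y)) =ᶠ[nhds x] g := by
  filter_upwards [Icc_mem_nhds hx.1 hx.2] with y hy
  rw [coe_projIcc_of_mem h hy]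

theorem continuous_iteratedDerivWithin_projIcc (hab : a < b) (hf : ContDiffOn ℝ n f (Icc a b))
    (hk : k ≤ n) :
    Continuous fun y => iteratedDerivWithin k f (Icc a b) (projIcc a b hab.le y) :=
  (hf.continuousOn_iteratedDerivWithin (by exact_mod_cast hk)
    (uniqueDiffOn_Icc hab)).comp_continuous continuous_projIcc.subtype_val fun y =>
      (projIcc a b hab.le y).2

theorem hasDerivAt_iteratedDerivWithin_projIcc (hab : a < b) (hf : ContDiffOn ℝ n f (Icc a b))
    (hk : k < n) (hx : x ∈ Ioo a b) :
    HasDerivAt (fun y => iteratedDerivWithin k f (Icc a b) (projIcc a b hab.le y))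
      (iteratedDerivWithin (k + 1) f (Icc a b) (projIcc a b hab.le x)) x := by
  have hx' := Ioo_subset_Icc_self hx
  refine HasDerivAt.congr_of_eventuallyEq ?_ (comp_projIcc_eventuallyEq hab.le hx _)
  rw [coe_projIcc_of_mem hab.le hx', iteratedDerivWithin_succ]
  exact (hf.differentiableOn_iteratedDerivWithin (by exact_mod_cast hk) (uniqueDiffOn_Icc hab) x
    hx').hasDerivWithinAt.hasDerivAt (Icc_mem_nhds hx.1 hx.2)

theorem profile_comp_projIcc {L : ℝ} (hL : 0 < L) (hf : ContDiffOn ℝ 3 f (Icc 0 L))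
    (h₀ : f 0 = 0) (hfL : f L = 0) (hf'L : derivWithin f (Icc 0 L) L = 0) :
    Profile L (fun x => f (projIcc 0 L hL.le x))
      (fun x => iteratedDerivWithin 1 f (Icc 0 L) (projIcc 0 L hL.le x))
      (fun x => iteratedDerivWithin 2 f (Icc 0 L) (projIcc 0 L hL.le x))
      (fun x => iteratedDerivWithin 3 f (Icc 0 L) (projIcc 0 L hL.le x)) where
  continuous := by
    simpa using continuous_iteratedDerivWithin_projIcc hL hf (Nat.zero_le 3)
  continuous₁ := continuous_iteratedDerivWithin_projIcc hL hf (by norm_num)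
  continuous₂ := continuous_iteratedDerivWithin_projIcc hL hf (by norm_num)
  continuous₃ := continuous_iteratedDerivWithin_projIcc hL hf le_rfl
  hasDerivAt x hx := by
    simpa using hasDerivAt_iteratedDerivWithin_projIcc hL hf three_pos hx
  hasDerivAt₁ x hx := hasDerivAt_iteratedDerivWithin_projIcc hL hf (by norm_num) hx
  hasDerivAt₂ x hx := hasDerivAt_iteratedDerivWithin_projIcc hL hf (by norm_num) hx
  left := by simpa using h₀
  right := by simpa using hfL
  deriv_right := by simpa [iteratedDerivWithin_one] using hf'L

end ProjIcc

section ClassicalSolution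

variable {L T t x : ℝ} {z : ℝ → ℝ → ℝ}

theorem continuous_comp_projIcc (hL : 0 ≤ L) (hT : 0 ≤ T) (hz : IsLinearKdVSol L T z) :
    Continuous fun p : ℝ × ℝ => z (projIcc 0 T hT p.1) (projIcc 0 L hL p.2) :=
  hz.2.2.1.comp_continuous (f := fun p : ℝ × ℝ => ((projIcc 0 T hT p.1 : ℝ),
    (projIcc 0 L hL p.2 : ℝ))) (by fun_prop) fun _ => ⟨Subtype.prop _, Subtype.prop _⟩

theorem hasDerivAt_time_comp_projIcc (hL : 0 ≤ L) (hT : 0 ≤ T) (hz : IsLinearKdVSol L T z)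
    (hx : x ∈ Icc 0 L) (ht : t ∈ Ioo 0 T) :
    HasDerivAt (fun s => z (projIcc 0 T hT s) (projIcc 0 L hL x))
      (derivWithin (fun s => z s x) (Icc 0 T) t) t := by
  rw [coe_projIcc_of_mem hL hx]
  refine HasDerivAt.congr_of_eventuallyEq ?_ (comp_projIcc_eventuallyEq hT ht fun s => z s x)
  exact ((hz.2.1 x hx).differentiableOn one_ne_zero t
    (Ioo_subset_Icc_self ht)).hasDerivWithinAt.hasDerivAt (Icc_mem_nhds ht.1 ht.2)

theorem classicalSolution_comp_projIcc (hL : 0 < L) (hT : 0 < T) (hz : IsLinearKdVSol L T z) :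
    ClassicalSolution L T (fun t x => z (projIcc 0 T hT.le t) (projIcc 0 L hL.le x))
      (fun t x => iteratedDerivWithin 1 (z (projIcc 0 T hT.le t)) (Icc 0 L) (projIcc 0 L hL.le x))
      (fun t x => iteratedDerivWithin 2 (z (projIcc 0 T hT.le t)) (Icc 0 L) (projIcc 0 L hL.le x))
      (fun t x => iteratedDerivWithin 3 (z (projIcc 0 T hT.le t)) (Icc 0 L) (projIcc 0 L hL.le x))
      (fun t x => deriv (fun s => z (projIcc 0 T hT.le s) (projIcc 0 L hL.le x)) t) where
  continuous := continuous_comp_projIcc hL.le hT.le hz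
  profile t _ := by
    have hmem := (projIcc 0 T hT.le t).2
    obtain ⟨h₀, hzL, hz'L⟩ := hz.2.2.2.2 _ hmem
    exact profile_comp_projIcc hL (hz.1 _ hmem) h₀ hzL hz'L
  hasDerivAt_time x hx t ht :=
    (hasDerivAt_time_comp_projIcc hL.le hT.le hz
      (Ioo_subset_Icc_self hx) ht).differentiableAt.hasDerivAt
  continuousOn_time_deriv x hx := by
    have hx' := Ioo_subset_Icc_self hx
    refine (((hz.2.1 x hx').continuousOn_derivWithin (uniqueDiffOn_Icc hT) le_rfl).mono
      Ioo_subset_Icc_self).congr fun t ht => ?_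
    exact (hasDerivAt_time_comp_projIcc hL.le hT.le hz hx' ht).deriv
  measurable_time_deriv :=
    (measurable_deriv_with_param (f := fun x t => z (projIcc 0 T hT.le t) (projIcc 0 L hL.le x))
      ((continuous_comp_projIcc hL.le hT.le hz).comp continuous_swap)).comp measurable_swap
  eq_neg t ht x hx := by
    have hx' := Ioo_subset_Icc_self hx
    rw [(hasDerivAt_time_comp_projIcc hL.le hT.le hz hx' ht).deriv, coe_projIcc_of_mem _ hx',
      coe_projIcc_of_mem _ (Ioo_subset_Icc_self ht), iteratedDerivWithin_one]
    linarith [hz.2.2.2.1 t ht x hx]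

end ClassicalSolution

theorem integral_comp_projIcc {L : ℝ} (hL : 0 ≤ L) (f : ℝ → ℝ) :
    ∫ x in (0 : ℝ)..L, f (projIcc 0 L hL x) = ∫ x in (0 : ℝ)..L, f x :=
  intervalIntegral.integral_congr fun x hx => by
    rw [uIcc_of_le hL] at hx
    simp only [coe_projIcc_of_mem hL hx]

theorem H1norm_eq_sqrt_of_contDiffOn {L : ℝ} {f : ℝ → ℝ} (hL : 0 < L)
    (hf : ContDiffOn ℝ 1 f (Icc 0 L)) :
    H1norm L f = √((∫ x in (0 : ℝ)..L, f x ^ 2) +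
      ∫ x in (0 : ℝ)..L, derivWithin f (Icc 0 L) x ^ 2) := by
  have hf₁ := hf.continuousOn_derivWithin (uniqueDiffOn_Icc hL) le_rfl
  rw [H1norm, intervalIntegral.integral_add]
  · exact (hf.continuousOn.pow 2).intervalIntegrable_of_Icc hL.le
  · exact (hf₁.pow 2).intervalIntegrable_of_Icc hL.le

theorem exists_integral_sq_le_and_integral_derivWithin_sq_le_div {L T : ℝ} (hL : 0 < L)
    (hT : 0 < T) : ∃ C > 0, ∀ z, IsLinearKdVSol L T z → ∀ t ∈ Ioc 0 T,
      ∫ x in (0 : ℝ)..L, z t x ^ 2 ≤ ∫ x in (0 : ℝ)..L, z 0 x ^ 2 ∧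
      ∫ x in (0 : ℝ)..L, derivWithin (z t) (Icc 0 L) x ^ 2 ≤
        C / t * ∫ x in (0 : ℝ)..L, z 0 x ^ 2 := by
  obtain ⟨C, hC, hbound⟩ := MildSolution.exists_integral_deriv_sq_le_div hL hT
  refine ⟨C, hC, fun z hz t ht => ?_⟩
  have ht' := Ioc_subset_Icc_self ht
  have h0 := left_mem_Icc.2 hT.le
  have hclassical := classicalSolution_comp_projIcc hL hT hz
  have hmild := hclassical.mildSolution hL
  have henergy := hmild.antitoneOn_integral_sq hL h0 ht' ht.1.le
  have hsmoothing := hbound _ hmild t ht _ _ _ (hclassical.profile t ht')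
  simp only [coe_projIcc_of_mem hT.le ht', coe_projIcc_of_mem hT.le h0, iteratedDerivWithin_one,
    integral_comp_projIcc hL.le fun x => z 0 x ^ 2, integral_comp_projIcc hL.le fun x => z t x ^ 2,
    integral_comp_projIcc hL.le fun x => derivWithin (z t) (Icc 0 L) x ^ 2] at henergy hsmoothing
  exact ⟨henergy, hsmoothing⟩

end LinearKdV

/-- for fixed `T > 0` there is `C > 0` such that every classical solution
`z` of the linearized KdV system with initial datum `z₀ ∈ H³(0,L)` (here: `C³` on
`[0,L]`) satisfying the boundary conditions, one has the smoothing estimate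
`‖z(t,·)‖_{H₀¹(0,L)} ≤ (C/√t) ‖z₀‖_{L²(0,L)}` for all `t ∈ (0,T]`. -/
theorem linearKdV_smoothing_rate (L T : ℝ) (hL : 0 < L) (hT : 0 < T) :
    ∃ C > 0, ∀ z₀ : ℝ → ℝ, ContDiffOn ℝ 3 z₀ (Icc (0:ℝ) L) →
      z₀ 0 = 0 → z₀ L = 0 → derivWithin z₀ (Icc (0:ℝ) L) L = 0 →
      ∀ z : ℝ → ℝ → ℝ, IsLinearKdVSol L T z →
      (∀ x ∈ Icc (0:ℝ) L, z 0 x = z₀ x) →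
      ∀ t ∈ Ioc (0:ℝ) T, H1norm L (z t) ≤ C / Real.sqrt t * L2norm L z₀ := by
  obtain ⟨C, hC, hbound⟩ :=
    LinearKdV.exists_integral_sq_le_and_integral_derivWithin_sq_le_div hL hT
  refine ⟨√(T + C), by positivity, fun z₀ _ _ _ _ z hz hz₀ t ht => ?_⟩
  obtain ⟨henergy, hsmoothing⟩ := hbound z hz t ht
  have hinit : ∫ x in (0 : ℝ)..L, z 0 x ^ 2 = ∫ x in (0 : ℝ)..L, z₀ x ^ 2 :=
    intervalIntegral.integral_congr fun x hx => by
      simp only [hz₀ x (uIcc_of_le hL.le ▸ hx)]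
  have hnonneg : 0 ≤ ∫ x in (0 : ℝ)..L, z₀ x ^ 2 := LinearKdV.integral_sq_nonneg hL.le z₀
  have hone : 1 ≤ T / t := (one_le_div ht.1).2 ht.2
  have ht₀ := ht.1
  rw [hinit] at henergy hsmoothing
  rw [LinearKdV.H1norm_eq_sqrt_of_contDiffOn hL
    ((hz.1 t (Ioc_subset_Icc_self ht)).of_le (by norm_num)), L2norm,
    ← Real.sqrt_div (by positivity), ← Real.sqrt_mul (by positivity)]
  refine Real.sqrt_le_sqrt ?_
  calc _ ≤ 1 * (∫ x in (0 : ℝ)..L, z₀ x ^ 2) + C / t * ∫ x in (0 : ℝ)..L, z₀ x ^ 2 := by linarith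
    _ ≤ T / t * (∫ x in (0 : ℝ)..L, z₀ x ^ 2) + C / t * ∫ x in (0 : ℝ)..L, z₀ x ^ 2 := by gcongr
    _ = _ := by ring
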